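/- arXiv:1512.00971 — 10 statements merged into one kernel-verified Lean document; each statement's English description precedes it below -/
import Mathlib

section
/- Let λ > 0 and let f : ℝⁿ × [0,∞) → ℝⁿ be such that for every t ≥ 0 and all a, b ∈ ℝⁿ, ⟨f(a,t) − f(b,t), a − b⟩ ≤ −λ‖a − b‖². If x, y : [0,∞) → ℝⁿ are differentiable and satisfy x′(t) = f(x(t), t) and y′(t) = f(y(t), t) for all t ≥ 0, then for all t ≥ 0, ‖x(t) − y(t)‖ ≤ e^{−λ t} ‖x(0) − y(0)‖. -/
/-!
The weighted squared distance `exp (2 λ s) ‖x s - y s‖²` has derivative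
`2 exp (2 λ s) (λ ‖x s - y s‖² + ⟪x s - y s, f (x s) s - f (y s) s⟫)`, which is nonpositive by
contraction. Hence it is nonincreasing on `[0, ∞)`; comparing its values at `0` and `t` and
taking square roots gives the bound.
-/

open scoped RealInnerProductSpace

/-- Contraction in the identity metric implies exponential convergence of trajectories. -/
theorem stmt_0 {n : ℕ} (lam : ℝ) (hlam : 0 < lam)
    (f : EuclideanSpace ℝ (Fin n) → ℝ → EuclideanSpace ℝ (Fin n))
    (hf : ∀ t ≥ (0:ℝ), ∀ a b : EuclideanSpace ℝ (Fin n),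
      ⟪f a t - f b t, a - b⟫ ≤ -lam * ‖a - b‖ ^ 2)
    (x y : ℝ → EuclideanSpace ℝ (Fin n))
    (hx : ∀ t ≥ (0:ℝ), HasDerivAt x (f (x t) t) t)
    (hy : ∀ t ≥ (0:ℝ), HasDerivAt y (f (y t) t) t) :
    ∀ t ≥ (0:ℝ), ‖x t - y t‖ ≤ Real.exp (-lam * t) * ‖x 0 - y 0‖ := by
  have hder : ∀ s ≥ (0:ℝ), HasDerivAt (fun s => Real.exp (2 * lam * s) * ‖x s - y s‖ ^ 2)
      (Real.exp (2 * lam * s) * (2 * lam) * ‖x s - y s‖ ^ 2 +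
        Real.exp (2 * lam * s) * (2 * ⟪x s - y s, f (x s) s - f (y s) s⟫)) s := by
    intro s hs
    have h1 : HasDerivAt (fun s : ℝ => Real.exp (2 * lam * s))
        (Real.exp (2 * lam * s) * (2 * lam)) s := by
      simpa using ((hasDerivAt_id s).const_mul (2 * lam)).exp
    exact h1.mul ((hx s hs).sub (hy s hs)).norm_sq
  have hanti : AntitoneOn (fun s => Real.exp (2 * lam * s) * ‖x s - y s‖ ^ 2) (Set.Ici 0) := by
    refine antitoneOn_of_deriv_nonpos (convex_Ici 0)
      (fun s hs => (hder s hs).continuousAt.continuousWithinAt)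
      (fun s hs => (hder s (interior_subset hs)).differentiableAt.differentiableWithinAt)
      (fun s hs => ?_)
    have hs0 : s ≥ 0 := interior_subset hs
    rw [(hder s hs0).deriv]
    have h := hf s hs0 (x s) (y s)
    rw [real_inner_comm] at h
    nlinarith [mul_le_mul_of_nonneg_left h (Real.exp_pos (2 * lam * s)).le]
  intro t ht
  have h := hanti (Set.mem_Ici.2 le_rfl) (Set.mem_Ici.2 ht) ht
  simp only [mul_zero, Real.exp_zero, one_mul] at h
  have hsq : Real.exp (2 * lam * t) = Real.exp (lam * t) ^ 2 := by
    rw [← Real.exp_nat_mul]; push_cast; ring_nf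
  rw [hsq, ← mul_pow] at h
  have h' := (abs_le_of_sq_le_sq' h (norm_nonneg _)).2
  rw [neg_mul, Real.exp_neg, inv_mul_eq_div, le_div_iff₀ (Real.exp_pos _), mul_comm]
  exact h'
end

section
/- Let M be a symmetric positive definite n×n real matrix and suppose there are constants 0 < m₁ ≤ m₂ with m₁‖v‖² ≤ ⟨M v, v⟩ ≤ m₂‖v‖² for all v ∈ ℝⁿ. Let λ > 0 and let f : ℝⁿ × [0,∞) → ℝⁿ satisfy ⟨M(f(a,t) − f(b,t)), a − b⟩ ≤ −λ ⟨M(a − b), a − b⟩ for all a, b ∈ ℝⁿ and t ≥ 0. If x, y : [0,∞) → ℝⁿ are differentiable with x′(t) = f(x(t), t) and y′(t) = f(y(t), t) for all t ≥ 0, then for all t ≥ 0, ‖x(t) − y(t)‖ ≤ χ e^{−λ t} ‖x(0) − y(0)‖, where χ = √(m₂/m₁). -/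
open scoped RealInnerProductSpace

/-!
With `d = x - y`, the Lyapunov function `t ↦ exp (2 λ t) * ⟪M d, d⟫` has derivative
`exp (2 λ t) * (2 λ ⟪M d, d⟫ + 2 ⟪M d', d⟫)` because `M` is symmetric, and the contraction hypothesis
makes this nonpositive for `t ≥ 0`. Hence `⟪M d, d⟫` decays like `exp (-2 λ t)`; comparing it with
`‖d‖ ^ 2` from below by `m₁` and from above by `m₂` and taking square roots gives the bound.
-/

/-- Contraction in a constant metric `M` implies exponential convergence of trajectories,
with overshoot given by the condition number `χ = √(m₂/m₁)`. -/
theorem stmt_1 {n : ℕ} (M : Matrix (Fin n) (Fin n) ℝ) (hMsymm : M.IsSymm) (hMpd : M.PosDef)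
    (m₁ m₂ : ℝ) (hm₁ : 0 < m₁) (hm₁₂ : m₁ ≤ m₂)
    (hlow : ∀ v : EuclideanSpace ℝ (Fin n), m₁ * ‖v‖ ^ 2 ≤ ⟪Matrix.toEuclideanLin M v, v⟫)
    (hhigh : ∀ v : EuclideanSpace ℝ (Fin n), ⟪Matrix.toEuclideanLin M v, v⟫ ≤ m₂ * ‖v‖ ^ 2)
    (lam : ℝ) (hlam : 0 < lam)
    (f : EuclideanSpace ℝ (Fin n) → ℝ → EuclideanSpace ℝ (Fin n))
    (hf : ∀ t ≥ (0:ℝ), ∀ a b : EuclideanSpace ℝ (Fin n),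
      ⟪Matrix.toEuclideanLin M (f a t - f b t), a - b⟫ ≤
        -lam * ⟪Matrix.toEuclideanLin M (a - b), a - b⟫)
    (x y : ℝ → EuclideanSpace ℝ (Fin n))
    (hx : ∀ t ≥ (0:ℝ), HasDerivAt x (f (x t) t) t)
    (hy : ∀ t ≥ (0:ℝ), HasDerivAt y (f (y t) t) t) :
    ∀ t ≥ (0:ℝ), ‖x t - y t‖ ≤ Real.sqrt (m₂ / m₁) * Real.exp (-lam * t) * ‖x 0 - y 0‖ := by
  intro t ht
  set L : EuclideanSpace ℝ (Fin n) →L[ℝ] EuclideanSpace ℝ (Fin n) :=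
    LinearMap.toContinuousLinearMap (Matrix.toEuclideanLin M)
  have hLM : ∀ v, L v = Matrix.toEuclideanLin M v := fun v => rfl
  have hsymm : ∀ u v, ⟪L u, v⟫ = ⟪u, L v⟫ :=
    Matrix.isSymmetric_toEuclideanLin_iff.mpr hMpd.isHermitian
  simp only [← hLM] at hlow hhigh hf
  have hderiv : ∀ s ≥ (0:ℝ), HasDerivAt
      (fun s => Real.exp (2 * lam * s) * ⟪L (x s - y s), x s - y s⟫)
      (Real.exp (2 * lam * s) * (2 * lam * ⟪L (x s - y s), x s - y s⟫
        + 2 * ⟪L (f (x s) s - f (y s) s), x s - y s⟫)) s := by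
    intro s hs
    have hd := (hx s hs).fun_sub (hy s hs)
    have hq := (L.hasFDerivAt.comp_hasDerivAt s hd).inner ℝ hd
    have he : HasDerivAt (fun s => Real.exp (2 * lam * s))
        (Real.exp (2 * lam * s) * (2 * lam)) s := by
      simpa using ((hasDerivAt_id s).const_mul (2 * lam)).exp
    refine (he.fun_mul hq).congr_deriv ?_
    have hswap : ⟪L (x s - y s), f (x s) s - f (y s) s⟫
        = ⟪L (f (x s) s - f (y s) s), x s - y s⟫ := by
      rw [hsymm, real_inner_comm]
    simp only [Function.comp_apply]
    rw [hswap]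
    ring
  have hanti : AntitoneOn (fun s => Real.exp (2 * lam * s) * ⟪L (x s - y s), x s - y s⟫)
      (Set.Ici 0) := by
    refine antitoneOn_of_hasDerivWithinAt_nonpos (convex_Ici 0)
      (fun s hs => (hderiv s hs).continuousAt.continuousWithinAt)
      (fun s hs => (hderiv s (interior_subset hs)).hasDerivWithinAt) ?_
    intro s hs
    have := hf s (interior_subset hs) (x s) (y s)
    exact mul_nonpos_of_nonneg_of_nonpos (Real.exp_pos _).le (by linarith)
  have hdecay := hanti (Set.mem_Ici.mpr le_rfl) (Set.mem_Ici.mpr ht) ht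
  simp only [mul_zero, Real.exp_zero, one_mul] at hdecay
  have hm₂ : 0 < m₂ := hm₁.trans_le hm₁₂
  have hexp : Real.exp (2 * lam * t) * Real.exp (-lam * t) ^ 2 = 1 := by
    rw [← Real.exp_nat_mul, ← Real.exp_add, Real.exp_eq_one_iff]
    push_cast
    ring
  have hbound : Real.exp (2 * lam * t) * (m₁ * ‖x t - y t‖ ^ 2) ≤ m₂ * ‖x 0 - y 0‖ ^ 2 :=
    (mul_le_mul_of_nonneg_left (hlow _) (Real.exp_pos _).le).trans (hdecay.trans (hhigh _))
  refine (abs_le_of_sq_le_sq' ?_ (by positivity)).2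
  rw [mul_pow, mul_pow, Real.sq_sqrt (by positivity)]
  calc ‖x t - y t‖ ^ 2
      = Real.exp (-lam * t) ^ 2 / m₁
          * (Real.exp (2 * lam * t) * (m₁ * ‖x t - y t‖ ^ 2)) := by
        have hm : m₁ / m₁ = 1 := div_self hm₁.ne'
        calc ‖x t - y t‖ ^ 2
            = (Real.exp (2 * lam * t) * Real.exp (-lam * t) ^ 2) * (m₁ / m₁)
                * ‖x t - y t‖ ^ 2 := by rw [hexp, hm, one_mul, one_mul]
          _ = _ := by ring
    _ ≤ Real.exp (-lam * t) ^ 2 / m₁ * (m₂ * ‖x 0 - y 0‖ ^ 2) := by gcongr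
    _ = m₂ / m₁ * Real.exp (-lam * t) ^ 2 * ‖x 0 - y 0‖ ^ 2 := by ring
end

section
/- Let λ > 0 and let f : ℝⁿ → ℝⁿ be continuous and satisfy ⟨f(a) − f(b), a − b⟩ ≤ −λ‖a − b‖² for all a, b ∈ ℝⁿ. Then there exists a unique point x* ∈ ℝⁿ with f(x*) = 0; moreover every differentiable solution x : [0,∞) → ℝⁿ of x′(t) = f(x(t)) satisfies ‖x(t) − x*‖ ≤ e^{−λ t}‖x(0) − x*‖ for all t ≥ 0, so all trajectories converge to the unique equilibrium. -/
open scoped RealInnerProductSpace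

/-!
Existence of the equilibrium is the surjectivity theorem for strongly monotone maps, applied to
`F = -f`, and is obtained by Minty's method, without Brouwer's theorem. For `z` in the space put
`g_z(y) = ⟪F z, z - y⟫ - lam * ‖z - y‖ ^ 2`, a concave function of `y`. A point `y` with
`0 ≤ g_z(y)` for all `z` is a zero of `F`: take `z = y + t • w` and let `t → 0⁺`
(`eq_zero_of_minty`). Such a point is found by compactness in the intersection of the bounded
closed sets `{y | -ε ≤ g_z(y)}`, `ε > 0`, once finitely many of them are known to meet
(`exists_finite_minty`). If `g_i + ε_i`, `i ∈ ι`, had no common point of positivity, Hahn–Banach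
would give weights `w ≥ 0` of sum one with `∑ w_i (g_i + ε_i) ≤ 0` everywhere; but at the
barycentre `y = ∑ w_i z_i` monotonicity gives `∑ w_i g_i(y) ≥ 0` (`sum_weighted_nonneg`).

Uniqueness is immediate from contraction, and the decay estimate holds because
`exp (2 * lam * t) * ‖x t - xs‖ ^ 2` is nonincreasing along trajectories.
-/

section Minty

variable {E : Type*} [NormedAddCommGroup E] [InnerProductSpace ℝ E]

/-- The function `g_z(y) = ⟪F z, z - y⟫ - lam * ‖z - y‖ ^ 2`, concave in `y`. For a `lam`-strongly
monotone `F`, the zero `y` of `F` satisfies `0 ≤ g_z(y)` for every `z`. -/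
noncomputable def mintyGap (F : E → E) (lam : ℝ) (z y : E) : ℝ :=
  ⟪F z, z - y⟫ - lam * ‖z - y‖ ^ 2

lemma continuous_mintyGap (F : E → E) (lam : ℝ) (z : E) : Continuous (mintyGap F lam z) := by
  unfold mintyGap
  fun_prop

lemma mintyGap_concave (F : E → E) {lam : ℝ} (hlam : 0 < lam) (z y y' : E) {a b : ℝ}
    (ha : 0 ≤ a) (hb : 0 ≤ b) (hab : a + b = 1) :
    a * mintyGap F lam z y + b * mintyGap F lam z y' ≤ mintyGap F lam z (a • y + b • y') := by
  have e : z - (a • y + b • y') = a • (z - y) + b • (z - y') := by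
    have : z = (a + b) • z := by rw [hab, one_smul]
    nth_rewrite 1 [this]
    module
  unfold mintyGap
  rw [e]
  generalize z - y = u
  generalize z - y' = v
  have h1 : ‖a • u + b • v‖ ^ 2 = a ^ 2 * ‖u‖ ^ 2 + 2 * (a * b * ⟪u, v⟫) + b ^ 2 * ‖v‖ ^ 2 := by
    rw [norm_add_sq_real, norm_smul, norm_smul, inner_smul_left, inner_smul_right, mul_pow,
      mul_pow, Real.norm_eq_abs, Real.norm_eq_abs, sq_abs, sq_abs]
    simp only [conj_trivial]
    ring
  have h2 : 0 ≤ ‖u‖ ^ 2 - 2 * ⟪u, v⟫ + ‖v‖ ^ 2 := by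
    rw [← norm_sub_sq_real]; positivity
  rw [h1, inner_add_right, inner_smul_right, inner_smul_right]
  obtain rfl : b = 1 - a := by linarith
  have h3 := mul_nonneg hlam.le (mul_nonneg (mul_nonneg ha hb) h2)
  nlinarith [h3]

/-- At the barycentre `y` of the points `z i` with weights `w i`, the weighted sum of the
`mintyGap`s is half of `∑ i, ∑ j, w i * w j * ⟪G (z i) - G (z j), z i - z j⟫` for the monotone map
`G = F - lam • id`. -/
lemma sum_weighted_nonneg {ι : Type*} [Fintype ι] {F : E → E} {lam : ℝ}
    (hF : ∀ a b, lam * ‖a - b‖ ^ 2 ≤ ⟪F a - F b, a - b⟫) (z : ι → E) (w : ι → ℝ)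
    (hw : ∀ i, 0 ≤ w i) (hw1 : ∑ i, w i = 1) :
    0 ≤ ∑ i, w i * mintyGap F lam (z i) (∑ j, w j • z j) := by
  set y := ∑ j, w j • z j with hy
  set G : E → E := fun a => F a - lam • a with hG
  have hy' : ∀ i, z i - y = ∑ j, w j • (z i - z j) := by
    intro i
    simp only [smul_sub, Finset.sum_sub_distrib, ← Finset.sum_smul, hw1, one_smul, hy]
  have h0 : ∑ i, w i * ⟪y, z i - y⟫ = 0 := by
    have : ∑ i, w i • (z i - y) = 0 := by
      simp only [smul_sub, Finset.sum_sub_distrib, ← Finset.sum_smul, hw1, one_smul, ← hy, sub_self]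
    have h := congrArg (fun v => ⟪y, v⟫) this
    simpa only [inner_sum, inner_smul_right, inner_zero_right] using h
  have h1 : ∑ i, w i * mintyGap F lam (z i) y = ∑ i, w i * ⟪G (z i), z i - y⟫ := by
    have : ∀ i, w i * mintyGap F lam (z i) y
        = w i * ⟪G (z i), z i - y⟫ + lam * (w i * ⟪y, z i - y⟫) := by
      intro i
      simp only [mintyGap, hG]
      rw [← real_inner_self_eq_norm_sq, inner_sub_left (z i) y, inner_sub_left (F (z i)),
        real_inner_smul_left]
      ring
    rw [Finset.sum_congr rfl fun i _ => this i, Finset.sum_add_distrib, ← Finset.mul_sum, h0]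
    ring
  have h2 : ∑ i, w i * ⟪G (z i), z i - y⟫ = ∑ i, ∑ j, w i * w j * ⟪G (z i), z i - z j⟫ := by
    refine Finset.sum_congr rfl fun i _ => ?_
    rw [hy' i, inner_sum, Finset.mul_sum]
    refine Finset.sum_congr rfl fun j _ => ?_
    rw [real_inner_smul_right]; ring
  have h3 : ∑ i, ∑ j, w i * w j * ⟪G (z i), z i - z j⟫
      = ∑ i, ∑ j, w i * w j * ⟪G (z j), z j - z i⟫ := by
    rw [Finset.sum_comm]
    refine Finset.sum_congr rfl fun j _ => Finset.sum_congr rfl fun i _ => ?_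
    ring
  have h4 : 0 ≤ ∑ i, ∑ j, (w i * w j * ⟪G (z i), z i - z j⟫
      + w i * w j * ⟪G (z j), z j - z i⟫) := by
    refine Finset.sum_nonneg fun i _ => Finset.sum_nonneg fun j _ => ?_
    have hm : 0 ≤ ⟪G (z i), z i - z j⟫ + ⟪G (z j), z j - z i⟫ := by
      have h := hF (z i) (z j)
      have e : ⟪G (z i), z i - z j⟫ + ⟪G (z j), z j - z i⟫
          = ⟪F (z i) - F (z j), z i - z j⟫ - lam * ‖z i - z j‖ ^ 2 := by
        rw [← real_inner_self_eq_norm_sq]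
        simp only [hG, inner_sub_left, inner_sub_right, real_inner_smul_left]
        ring
      linarith
    rw [← mul_add]
    exact mul_nonneg (mul_nonneg (hw i) (hw j)) hm
  simp only [Finset.sum_add_distrib] at h4
  rw [h1, h2]
  linarith

/-- The slacks `ε i` make the inequality at the barycentre strict, as needed to contradict the
weak inequality coming from separation. -/
lemma exists_finite_minty {ι : Type*} [Fintype ι] {F : E → E} {lam : ℝ} (hlam : 0 < lam)
    (hF : ∀ a b, lam * ‖a - b‖ ^ 2 ≤ ⟪F a - F b, a - b⟫) (z : ι → E) (ε : ι → ℝ)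
    (hε : ∀ i, 0 < ε i) :
    ∃ y, ∀ i, -ε i ≤ mintyGap F lam (z i) y := by
  classical
  by_contra! hno
  -- the open convex set of vectors lying strictly below some value of `(g_i + ε_i)_i`
  let S : Set (ι → ℝ) := {v | ∃ y, ∀ i, v i < mintyGap F lam (z i) y + ε i}
  have hSc : Convex ℝ S := by
    rintro v ⟨y, hv⟩ v' ⟨y', hv'⟩ a b ha hb hab
    refine ⟨a • y + b • y', fun i => ?_⟩
    have h := mintyGap_concave F hlam (z i) y y' ha hb hab
    simp only [Pi.add_apply, Pi.smul_apply, smul_eq_mul]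
    have e : ε i = a * ε i + b * ε i := by rw [← add_mul, hab, one_mul]
    have h5 := hv i
    have h6 := hv' i
    rcases ha.eq_or_lt with rfl | ha'
    · obtain rfl : b = 1 := by linarith
      linarith
    · have := mul_lt_mul_of_pos_left h5 ha'
      have := mul_le_mul_of_nonneg_left h6.le hb
      linarith
  have hSo : IsOpen S := by
    have : S = ⋃ y, ⋂ i, {v : ι → ℝ | v i < mintyGap F lam (z i) y + ε i} := by
      ext v; simp [S]
    rw [this]
    exact isOpen_iUnion fun y => isOpen_iInter_of_finite fun i =>
      isOpen_lt (continuous_apply i) continuous_const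
  have h0 : (0 : ι → ℝ) ∉ S := by
    rintro ⟨y, hy⟩
    obtain ⟨i, hi⟩ := hno y
    have h := hy i
    simp only [Pi.zero_apply] at h
    linarith
  obtain ⟨L, hL⟩ := geometric_hahn_banach_open_point hSc hSo h0
  simp only [map_zero] at hL
  let c : ι → ℝ := fun i => L (Pi.single i 1)
  have hLc : ∀ v, L v = ∑ i, v i * c i := by
    intro v
    conv_lhs => rw [pi_eq_sum_univ' v]
    rw [map_sum]
    refine Finset.sum_congr rfl fun i _ => ?_
    rw [map_smul, smul_eq_mul]
  -- `S` is stable under decreasing coordinates, so a negative `c i` would make `L` unbounded on it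
  let v₀ : ι → ℝ := fun i => mintyGap F lam (z i) 0
  have hv₀ : v₀ ∈ S := ⟨0, fun i => by simp only [v₀]; linarith [hε i]⟩
  have hc : ∀ i, 0 ≤ c i := by
    intro i
    by_contra! hi
    have hs : 0 ≤ L v₀ / c i := div_nonneg_of_nonpos (hL _ hv₀).le hi.le
    have hmem : v₀ - (L v₀ / c i) • Pi.single i (1 : ℝ) ∈ S := by
      refine ⟨0, fun j => ?_⟩
      have hj : 0 ≤ (Pi.single i (1 : ℝ) : ι → ℝ) j := by
        by_cases h : j = i
        · subst h; simp
        · simp [h]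
      have := mul_nonneg hs hj
      simp only [Pi.sub_apply, Pi.smul_apply, smul_eq_mul, v₀] at this ⊢
      linarith [hε j]
    have h := hL _ hmem
    rw [map_sub, map_smul, smul_eq_mul] at h
    change L v₀ - L v₀ / c i * c i < 0 at h
    rw [div_mul_cancel₀ _ hi.ne] at h
    linarith
  have hC : 0 < ∑ i, c i := by
    refine (Finset.sum_nonneg fun i _ => hc i).lt_of_ne fun h => ?_
    have hz := (Finset.sum_eq_zero_iff_of_nonneg fun i _ => hc i).1 h.symm
    have h1 := hL _ hv₀
    rw [hLc, Finset.sum_eq_zero fun i hi => by rw [hz i hi, mul_zero]] at h1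
    exact lt_irrefl _ h1
  let w : ι → ℝ := fun i => c i / ∑ j, c j
  have hb := sum_weighted_nonneg hF z w (fun i => div_nonneg (hc i) hC.le)
    (by simp only [w]; rw [← Finset.sum_div, div_self hC.ne'])
  set y := ∑ j, w j • z j
  have hlt := hL (fun i => mintyGap F lam (z i) y) ⟨y, fun i => by linarith [hε i]⟩
  rw [hLc] at hlt
  have e : ∑ i, w i * mintyGap F lam (z i) y
      = (∑ i, mintyGap F lam (z i) y * c i) / ∑ j, c j := by
    rw [Finset.sum_div]
    refine Finset.sum_congr rfl fun i _ => ?_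
    simp only [w]; ring
  rw [e] at hb
  exact absurd (div_neg_of_neg_of_pos hlt hC) (not_lt.2 hb)

lemma eq_zero_of_minty {F : E → E} (hFc : Continuous F) {lam : ℝ} (hlam : 0 < lam) {y : E}
    (hy : ∀ z, 0 ≤ mintyGap F lam z y) : F y = 0 := by
  have key : ∀ w : E, 0 ≤ ⟪F y, w⟫ := by
    intro w
    have hc : Continuous fun t : ℝ => ⟪F (y + t • w), w⟫ := by fun_prop
    have ht : Filter.Tendsto (fun t : ℝ => ⟪F (y + t • w), w⟫) (nhdsWithin 0 (Set.Ioi 0))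
        (nhds ⟪F y, w⟫) := by
      have := hc.tendsto 0
      simp only [zero_smul, add_zero] at this
      exact this.mono_left nhdsWithin_le_nhds
    refine ge_of_tendsto ht ?_
    filter_upwards [self_mem_nhdsWithin] with t ht
    have h := hy (y + t • w)
    simp only [mintyGap, add_sub_cancel_left, inner_smul_right] at h
    have : 0 ≤ lam * ‖t • w‖ ^ 2 := by positivity
    exact nonneg_of_mul_nonneg_right (by linarith) (Set.mem_Ioi.1 ht)
  have h := key (-F y)
  rw [inner_neg_right, real_inner_self_eq_norm_sq] at h
  have : ‖F y‖ ^ 2 = 0 := le_antisymm (by linarith) (by positivity)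
  simpa using this

lemma exists_zero_of_strongly_monotone [FiniteDimensional ℝ E] {F : E → E} (hFc : Continuous F)
    {lam : ℝ} (hlam : 0 < lam) (hF : ∀ a b, lam * ‖a - b‖ ^ 2 ≤ ⟪F a - F b, a - b⟫) :
    ∃ y, F y = 0 := by
  classical
  have : ProperSpace E := FiniteDimensional.proper ℝ E
  let C : E × Set.Ioi (0 : ℝ) → Set E := fun p => {y | -(p.2 : ℝ) ≤ mintyGap F lam p.1 y}
  have hCc : ∀ p, IsClosed (C p) := fun p =>
    isClosed_le continuous_const (continuous_mintyGap F lam p.1)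
  let p₀ : E × Set.Ioi (0 : ℝ) := (0, ⟨1, Set.mem_Ioi.2 one_pos⟩)
  have hcomp : IsCompact (C p₀) := by
    refine (isCompact_closedBall (0 : E) ((1 + ‖F 0‖) / lam + 1)).of_isClosed_subset (hCc p₀) ?_
    intro y hy
    simp only [C, p₀, Set.mem_setOf_eq, mintyGap, zero_sub, norm_neg, inner_neg_right] at hy
    rw [mem_closedBall_zero_iff]
    by_contra! hlt
    have h1 := neg_le_of_abs_le (abs_real_inner_le_norm (F 0) y)
    have hq : 0 ≤ (1 + ‖F 0‖) / lam := by positivity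
    have h2 : 1 + ‖F 0‖ < lam * ‖y‖ := by
      have : (1 + ‖F 0‖) / lam < ‖y‖ := by linarith
      rwa [div_lt_iff₀' hlam] at this
    have h3 : 1 < ‖y‖ := by linarith
    have h4 := mul_lt_mul_of_pos_right h2 (by linarith : 0 < ‖y‖)
    nlinarith
  obtain ⟨y, -, hy⟩ := hcomp.inter_iInter_nonempty C hCc (by
    intro u
    obtain ⟨y, hy⟩ := exists_finite_minty (ι := (insert p₀ u : Finset _)) hlam hF
      (fun i => i.1.1) (fun i => (i.1.2 : ℝ)) (fun i => i.1.2.2)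
    exact ⟨y, hy ⟨p₀, Finset.mem_insert_self _ _⟩,
      Set.mem_iInter₂.2 fun p hp => hy ⟨p, Finset.mem_insert_of_mem hp⟩⟩)
  refine ⟨y, eq_zero_of_minty hFc hlam fun z => ?_⟩
  refine le_of_forall_pos_le_add fun ε hε => ?_
  have h : -ε ≤ mintyGap F lam z y := Set.mem_iInter.1 hy (z, ⟨ε, hε⟩)
  linarith

end Minty

/-- A globally contracting autonomous system has a unique equilibrium point,
to which all trajectories converge exponentially (Lemma 1, identity metric). -/
theorem stmt_2 {n : ℕ} (lam : ℝ) (hlam : 0 < lam)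
    (f : EuclideanSpace ℝ (Fin n) → EuclideanSpace ℝ (Fin n))
    (hfc : Continuous f)
    (hf : ∀ a b : EuclideanSpace ℝ (Fin n), ⟪f a - f b, a - b⟫ ≤ -lam * ‖a - b‖ ^ 2) :
    ∃ xs : EuclideanSpace ℝ (Fin n),
      f xs = 0 ∧ (∀ y, f y = 0 → y = xs) ∧
      ∀ x : ℝ → EuclideanSpace ℝ (Fin n),
        (∀ t ≥ (0:ℝ), HasDerivAt x (f (x t)) t) →
        ∀ t ≥ (0:ℝ), ‖x t - xs‖ ≤ Real.exp (-lam * t) * ‖x 0 - xs‖ := by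
  obtain ⟨xs, hxs⟩ := exists_zero_of_strongly_monotone (F := fun a => -f a) hfc.neg hlam
    (by
      intro a b
      have h := hf a b
      have e : -f a - -f b = -(f a - f b) := by abel
      rw [e, inner_neg_left]
      linarith)
  have hxs0 : f xs = 0 := neg_eq_zero.1 hxs
  refine ⟨xs, hxs0, ?_, ?_⟩
  · intro y hy
    have h := hf y xs
    rw [hy, hxs0, sub_zero, inner_zero_left] at h
    have h1 : ‖y - xs‖ ^ 2 ≤ 0 := by
      by_contra! hpos
      nlinarith [mul_pos hlam hpos]
    have h2 : ‖y - xs‖ = 0 := by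
      have : ‖y - xs‖ ^ 2 = 0 := le_antisymm h1 (by positivity)
      simpa using this
    exact sub_eq_zero.1 (norm_eq_zero.1 h2)
  · intro x hx t ht
    let φ : ℝ → ℝ := fun s => Real.exp (2 * lam * s) * ‖x s - xs‖ ^ 2
    have hφ : ∀ s ≥ (0 : ℝ), HasDerivAt φ
        (Real.exp (2 * lam * s) * (2 * lam) * ‖x s - xs‖ ^ 2
          + Real.exp (2 * lam * s) * (2 * ⟪x s - xs, f (x s)⟫)) s := by
      intro s hs
      have h1 : HasDerivAt (fun s : ℝ => Real.exp (2 * lam * s))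
          (Real.exp (2 * lam * s) * (2 * lam)) s := by
        simpa using ((hasDerivAt_id s).const_mul (2 * lam)).exp
      exact h1.mul ((hx s hs).sub_const xs).norm_sq
    have hanti : AntitoneOn φ (Set.Ici 0) := by
      refine antitoneOn_of_deriv_nonpos (convex_Ici 0)
        (fun s hs => (hφ s hs).continuousAt.continuousWithinAt) ?_ ?_
      · intro s hs
        exact (hφ s (interior_subset hs)).differentiableAt.differentiableWithinAt
      · intro s hs
        rw [(hφ s (interior_subset hs)).deriv]
        have h := hf (x s) xs
        rw [hxs0, sub_zero, real_inner_comm] at h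
        have := mul_nonneg (Real.exp_pos (2 * lam * s)).le
          (by linarith : 0 ≤ -(lam * ‖x s - xs‖ ^ 2) - ⟪x s - xs, f (x s)⟫)
        linarith
    have h := hanti (Set.mem_Ici.2 le_rfl) (Set.mem_Ici.2 ht) ht
    simp only [φ, mul_zero, Real.exp_zero, one_mul] at h
    have hsq : (Real.exp (lam * t) * ‖x t - xs‖) ^ 2 ≤ ‖x 0 - xs‖ ^ 2 := by
      have e : Real.exp (2 * lam * t) = Real.exp (lam * t) ^ 2 := by
        rw [← Real.exp_nat_mul]; congr 1; push_cast; ring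
      rw [mul_pow, ← e]
      exact h
    have hle := le_of_sq_le_sq hsq (norm_nonneg _)
    have h5 := mul_le_mul_of_nonneg_left hle (Real.exp_pos (-lam * t)).le
    rwa [← mul_assoc, ← Real.exp_add, show -lam * t + lam * t = 0 by ring, Real.exp_zero,
      one_mul] at h5
end

section
/- Let λ > 0 and let f : ℝⁿ × [0,∞) → ℝⁿ satisfy ⟨f(a,t) − f(b,t), a − b⟩ ≤ −λ‖a − b‖² for all a, b ∈ ℝⁿ and t ≥ 0. Let d : ℝⁿ × [0,∞) → ℝⁿ be such that for some 0 ≤ λ′ < λ, ‖d(a,t) − d(b,t)‖ ≤ λ′‖a − b‖ for all a, b and t ≥ 0. Then any two differentiable solutions x_p, x_q : [0,∞) → ℝⁿ of the perturbed system x′(t) = f(x(t),t) + d(x(t),t) satisfy ‖x_p(t) − x_q(t)‖ ≤ e^{−(λ−λ′) t}‖x_p(0) − x_q(0)‖ for all t ≥ 0; in particular the perturbed system is still contracting. -/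
/-! With `z = xp - xq` and `c = lam - lam'`, Cauchy–Schwarz and the two hypotheses give
`⟪z', z⟫ ≤ -c ‖z‖²`. Hence `(exp (c t))² ‖z t‖²` has nonpositive derivative on `[0, ∞)`, so it is
bounded by its value at `0`; taking square roots gives the claim. -/

open scoped RealInnerProductSpace

/-- Robustness of contraction (Lemma 2a, identity metric): a perturbation whose
Lipschitz constant `λ'` is below the contraction rate `λ` preserves contraction,
with reduced rate `λ - λ'`. -/
theorem stmt_3 {n : ℕ} (lam lam' : ℝ) (hlam : 0 < lam) (hlam' : 0 ≤ lam') (hlt : lam' < lam)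
    (f d : EuclideanSpace ℝ (Fin n) → ℝ → EuclideanSpace ℝ (Fin n))
    (hf : ∀ t ≥ (0:ℝ), ∀ a b : EuclideanSpace ℝ (Fin n),
      ⟪f a t - f b t, a - b⟫ ≤ -lam * ‖a - b‖ ^ 2)
    (hd : ∀ t ≥ (0:ℝ), ∀ a b : EuclideanSpace ℝ (Fin n),
      ‖d a t - d b t‖ ≤ lam' * ‖a - b‖)
    (xp xq : ℝ → EuclideanSpace ℝ (Fin n))
    (hxp : ∀ t ≥ (0:ℝ), HasDerivAt xp (f (xp t) t + d (xp t) t) t)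
    (hxq : ∀ t ≥ (0:ℝ), HasDerivAt xq (f (xq t) t + d (xq t) t) t) :
    ∀ t ≥ (0:ℝ), ‖xp t - xq t‖ ≤ Real.exp (-(lam - lam') * t) * ‖xp 0 - xq 0‖ := by
  intro t ht
  set c := lam - lam' with hc
  have key : ∀ s ≥ (0:ℝ), ⟪xp s - xq s, f (xp s) s + d (xp s) s - (f (xq s) s + d (xq s) s)⟫
      ≤ -c * ‖xp s - xq s‖ ^ 2 := by
    intro s hs
    have h1 := hf s hs (xp s) (xq s)
    have h2 := real_inner_le_norm (d (xp s) s - d (xq s) s) (xp s - xq s)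
    have h3 := mul_le_mul_of_nonneg_right (hd s hs (xp s) (xq s)) (norm_nonneg (xp s - xq s))
    rw [real_inner_comm, add_sub_add_comm, inner_add_left, hc]
    linarith
  have hderiv : ∀ s ≥ (0:ℝ), HasDerivAt (fun s => Real.exp (c * s) ^ 2 * ‖xp s - xq s‖ ^ 2)
      (2 * Real.exp (c * s) ^ 2 * (c * ‖xp s - xq s‖ ^ 2
        + ⟪xp s - xq s, f (xp s) s + d (xp s) s - (f (xq s) s + d (xq s) s)⟫)) s := by
    intro s hs
    have h1 := (((hasDerivAt_id s).const_mul c).exp).pow 2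
    have h2 := ((hxp s hs).sub (hxq s hs)).norm_sq
    refine (h1.mul h2).congr_deriv ?_
    simp
    ring
  have hanti : AntitoneOn (fun s => Real.exp (c * s) ^ 2 * ‖xp s - xq s‖ ^ 2) (Set.Ici 0) := by
    refine antitoneOn_of_deriv_nonpos (convex_Ici 0)
      (fun s hs => (hderiv s hs).continuousAt.continuousWithinAt)
      (fun s hs => (hderiv s (interior_subset hs)).differentiableAt.differentiableWithinAt) ?_
    intro s hs
    have hs0 : s ≥ 0 := interior_subset hs
    rw [(hderiv s hs0).deriv]
    exact mul_nonpos_of_nonneg_of_nonpos (by positivity) (by linarith [key s hs0])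
  have h0 : Real.exp (c * t) * ‖xp t - xq t‖ ≤ ‖xp 0 - xq 0‖ := by
    have h := hanti Set.self_mem_Ici ht ht
    simp only [mul_zero, Real.exp_zero, one_pow, one_mul, ← mul_pow] at h
    exact (sq_le_sq₀ (by positivity) (norm_nonneg _)).1 h
  rw [neg_mul, Real.exp_neg, ← div_eq_inv_mul, le_div_iff₀' (Real.exp_pos _)]
  exact h0
end

section
/- Let λ > 0 and let f : ℝⁿ × [0,∞) → ℝⁿ satisfy ⟨f(a,t) − f(b,t), a − b⟩ ≤ −λ‖a − b‖² for all a, b ∈ ℝⁿ and t ≥ 0. Let d : ℝⁿ × [0,∞) → ℝⁿ satisfy ‖d(a,t)‖ ≤ d̄ for all a, t, for some constant d̄ ≥ 0. If x : [0,∞) → ℝⁿ solves x′(t) = f(x(t),t) and x_p : [0,∞) → ℝⁿ solves the perturbed system x_p′(t) = f(x_p(t),t) + d(x_p(t),t), then for all t ≥ 0, ‖x_p(t) − x(t)‖ ≤ e^{−λ t}‖x_p(0) − x(0)‖ + (d̄/λ)(1 − e^{−λ t}); in particular limsup_{t→∞} ‖x_p(t) − x(t)‖ ≤ d̄/λ.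 -/
/-!
Write `e = xp - x`. By contraction and Cauchy–Schwarz, `⟪e', e⟫ ≤ -λ‖e‖² + d̄‖e‖`. Where `e ≠ 0` the
norm is differentiable and this reads `‖e‖' ≤ -λ‖e‖ + d̄`; where `e = 0` the two trajectories see the
same `f`, so `e' = d` and the right slope of `‖e‖` is at most `‖d‖ ≤ d̄`. Hence `‖e‖` satisfies the
differential inequality at every time in the sense of lower right Dini derivatives, and Grönwall's
inequality with the negative constant `-λ` gives the pointwise bound. Its right-hand side tends to
`d̄/λ`, which bounds the limsup.
-/

open scoped RealInnerProductSpace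

open Filter Topology in
/-- The norm of a curve `e` with `⟪e', e⟫ ≤ K‖e‖² + c‖e‖`, and with `‖e'‖ ≤ c` at zeros of `e`
(where the inner-product inequality is void), has lower right Dini derivative at most
`K‖e‖ + c`. -/
lemma frequently_slope_norm_lt {E : Type*} [NormedAddCommGroup E] [InnerProductSpace ℝ E]
    {e : ℝ → E} {e' : E} {K c t r : ℝ} (he : HasDerivAt e e' t)
    (hin : ⟪e', e t⟫ ≤ K * ‖e t‖ ^ 2 + c * ‖e t‖) (hzero : e t = 0 → ‖e'‖ ≤ c)
    (hr : K * ‖e t‖ + c < r) :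
    ∃ᶠ z in 𝓝[>] t, (z - t)⁻¹ * (‖e z‖ - ‖e t‖) < r := by
  by_cases h0 : e t = 0
  · refine he.hasDerivWithinAt.liminf_right_slope_norm_le ((hzero h0).trans_lt ?_)
    simpa [h0] using hr
  · have hpos : 0 < ‖e t‖ := norm_pos_iff.mpr h0
    have hsq := he.norm_sq.sqrt (by positivity)
    simp only [Real.sqrt_sq (norm_nonneg _)] at hsq
    refine hsq.hasDerivWithinAt.liminf_right_slope_le (lt_of_le_of_lt ?_ hr)
    rw [div_le_iff₀ (by positivity), real_inner_comm]
    linarith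

/-- Robustness of contraction to bounded disturbances (Lemma 2b, identity metric):
the perturbed trajectory tracks the nominal one up to the steady-state bound `d̄/λ`. -/
theorem stmt_4 {n : ℕ} (lam db : ℝ) (hlam : 0 < lam) (hdb : 0 ≤ db)
    (f d : EuclideanSpace ℝ (Fin n) → ℝ → EuclideanSpace ℝ (Fin n))
    (hf : ∀ t ≥ (0:ℝ), ∀ a b : EuclideanSpace ℝ (Fin n),
      ⟪f a t - f b t, a - b⟫ ≤ -lam * ‖a - b‖ ^ 2)
    (hd : ∀ (a : EuclideanSpace ℝ (Fin n)) (t : ℝ), ‖d a t‖ ≤ db)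
    (x xp : ℝ → EuclideanSpace ℝ (Fin n))
    (hx : ∀ t ≥ (0:ℝ), HasDerivAt x (f (x t) t) t)
    (hxp : ∀ t ≥ (0:ℝ), HasDerivAt xp (f (xp t) t + d (xp t) t) t) :
    (∀ t ≥ (0:ℝ), ‖xp t - x t‖ ≤
        Real.exp (-lam * t) * ‖xp 0 - x 0‖ + db / lam * (1 - Real.exp (-lam * t))) ∧
    Filter.limsup (fun t => ‖xp t - x t‖) Filter.atTop ≤ db / lam := by
  have he : ∀ t ≥ (0:ℝ), HasDerivAt (fun s => xp s - x s)
      (f (xp t) t + d (xp t) t - f (x t) t) t := fun t ht => (hxp t ht).sub (hx t ht)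
  have key : ∀ t ≥ (0:ℝ), ‖xp t - x t‖ ≤
      Real.exp (-lam * t) * ‖xp 0 - x 0‖ + db / lam * (1 - Real.exp (-lam * t)) := by
    intro t ht
    have hG := le_gronwallBound_of_liminf_deriv_right_le (f := fun s => ‖xp s - x s‖)
      (f' := fun s => -lam * ‖xp s - x s‖ + db) (δ := ‖xp 0 - x 0‖) (K := -lam) (ε := db)
      (a := 0) (b := t)
      (fun s hs => (he s hs.1).continuousAt.norm.continuousWithinAt)
      (fun s hs r hr => ?_) le_rfl (fun s hs => le_rfl) t ⟨ht, le_rfl⟩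
    · rw [gronwallBound_of_K_ne_0 (neg_ne_zero.mpr hlam.ne')] at hG
      simp only [sub_zero, div_neg] at hG
      linarith
    · refine frequently_slope_norm_lt (he s hs.1) ?_ (fun h0 => ?_) hr
      · rw [add_sub_right_comm, inner_add_left]
        have hcs := (real_inner_le_norm (d (xp s) s) (xp s - x s)).trans
          (mul_le_mul_of_nonneg_right (hd (xp s) s) (norm_nonneg _))
        linarith [hf s hs.1 (xp s) (x s)]
      · rw [← sub_eq_zero.mp h0, add_sub_cancel_left]
        exact hd _ _
  refine ⟨key, ?_⟩
  have hexp : Filter.Tendsto (fun t : ℝ => Real.exp (-lam * t)) Filter.atTop (nhds 0) :=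
    Real.tendsto_exp_atBot.comp
      (Filter.tendsto_id.const_mul_atTop_of_neg (neg_lt_zero.mpr hlam))
  have hlim : Filter.Tendsto (fun t : ℝ => Real.exp (-lam * t) * ‖xp 0 - x 0‖ +
      db / lam * (1 - Real.exp (-lam * t))) Filter.atTop (nhds (db / lam)) := by
    simpa using (hexp.mul_const ‖xp 0 - x 0‖).add ((hexp.const_sub 1).const_mul (db / lam))
  rw [← hlim.limsup_eq]
  refine Filter.limsup_le_limsup ?_ ?_ hlim.isBoundedUnder_le
  · filter_upwards [Filter.eventually_ge_atTop (0:ℝ)] with t ht using key t ht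
  · exact Filter.IsCoboundedUnder.of_frequently_ge
      (a := 0) (Filter.Frequently.of_forall fun t => norm_nonneg _)
end

section
/- Let M be a symmetric positive definite n×n real matrix with m₁‖v‖² ≤ ⟨M v, v⟩ ≤ m₂‖v‖² for all v ∈ ℝⁿ, where 0 < m₁ ≤ m₂, and set χ = √(m₂/m₁). Let λ > 0 and f : ℝⁿ × [0,∞) → ℝⁿ satisfy ⟨M(f(a,t) − f(b,t)), a − b⟩ ≤ −λ⟨M(a−b), a−b⟩ for all a, b, t ≥ 0. Let d : ℝⁿ × [0,∞) → ℝⁿ satisfy ‖d(a,t)‖ ≤ d̄ for all a, t. If x solves x′ = f(x,t) and x_p solves x_p′ = f(x_p,t) + d(x_p,t) on [0,∞), then for all t ≥ 0, ‖x_p(t) − x(t)‖ ≤ χ e^{−λ t}‖x_p(0) − x(0)‖ + χ d̄/λ; in particular limsup_{t→∞} ‖x_p(t) − x(t)‖ ≤ χ d̄/λ. -/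
/-!
With `e = xp - x` and `V = ⟪M e, e⟫`, contraction and the Cauchy–Schwarz inequality for the form
`⟪M ·, ·⟫` give `V' ≤ -2 λ V + 2 c √V` with `c = √m₂ d̄`, i.e. formally `(√V)' ≤ -λ √V + c`.
Grönwall's argument then yields `√V(t) ≤ e^{-λ t} √V(0) + c / λ` (`sqrt_le_of_deriv_le`), and
comparing `√V` with `√m₁ ‖e‖` and `√m₂ ‖e‖` produces the factor `√(m₂ / m₁)`. The limsup bound
follows because the transient term tends to zero.
-/

open scoped RealInnerProductSpace

/-- Comparison principle for the square root of a Lyapunov function. Since `√V` need not be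
differentiable where `V` vanishes, the proof works with `√(V + ε²)` and lets `ε` tend to zero. -/
lemma sqrt_le_of_deriv_le {V V' : ℝ → ℝ} {lam c : ℝ} (hlam : 0 < lam) (hc : 0 ≤ c)
    (hV : ∀ t, 0 ≤ V t) (hderiv : ∀ t ≥ (0:ℝ), HasDerivAt V (V' t) t)
    (hle : ∀ t ≥ (0:ℝ), V' t ≤ -2 * lam * V t + 2 * c * √(V t)) {t : ℝ} (ht : 0 ≤ t) :
    √(V t) ≤ Real.exp (-lam * t) * √(V 0) + c / lam := by
  refine le_of_forall_pos_le_add fun δ hδ => ?_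
  obtain ⟨ε, hε, rfl⟩ : ∃ ε : ℝ, 0 < ε ∧ δ = 2 * ε := ⟨δ / 2, by linarith, by ring⟩
  set U : ℝ → ℝ := fun s => √(V s + ε ^ 2) with hU
  have hpos : ∀ s, 0 < V s + ε ^ 2 := fun s => by have := hV s; positivity
  have hUpos : ∀ s, 0 < U s := fun s => Real.sqrt_pos.2 (hpos s)
  have hUsq : ∀ s, U s ^ 2 = V s + ε ^ 2 := fun s => Real.sq_sqrt (hpos s).le
  have hεU : ∀ s, ε ≤ U s := fun s => Real.le_sqrt_of_sq_le (by have := hV s; linarith)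
  have hVU : ∀ s, √(V s) ≤ U s := fun s => Real.sqrt_le_sqrt (by nlinarith)
  have hUd : ∀ s ≥ (0:ℝ), HasDerivAt U (V' s / (2 * U s)) s := fun s hs =>
    ((hderiv s hs).add_const _).sqrt (hpos s).ne'
  have hUle : ∀ s ≥ (0:ℝ), V' s / (2 * U s) ≤ -lam * U s + (lam * ε + c) := by
    intro s hs
    rw [div_le_iff₀ (by have := hUpos s; positivity)]
    have h1 := hle s hs
    have h2 : c * √(V s) ≤ c * U s := mul_le_mul_of_nonneg_left (hVU s) hc
    have h3 : lam * (ε * ε) ≤ lam * (ε * U s) := by gcongr; exact hεU s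
    have h4 : lam * U s ^ 2 = lam * (V s + ε ^ 2) := by rw [hUsq]
    nlinarith
  -- The differential inequality says that `e^{λ s} (U s - (ε + c / λ))` is nonincreasing.
  set G : ℝ → ℝ := fun s => Real.exp (lam * s) * (U s - (ε + c / lam)) with hG
  have hGd : ∀ s ≥ (0:ℝ), HasDerivAt G (Real.exp (lam * s) * lam * (U s - (ε + c / lam)) +
      Real.exp (lam * s) * (V' s / (2 * U s))) s := by
    intro s hs
    have h1 : HasDerivAt (fun s => Real.exp (lam * s)) (Real.exp (lam * s) * lam) s := by
      simpa using ((hasDerivAt_id s).const_mul lam).exp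
    exact h1.mul ((hUd s hs).sub_const _)
  have hanti : AntitoneOn G (Set.Ici 0) := by
    refine antitoneOn_of_deriv_nonpos (convex_Ici 0)
      (fun s hs => (hGd s hs).continuousAt.continuousWithinAt) ?_ ?_
    · intro s hs
      rw [interior_Ici] at hs
      exact (hGd s (le_of_lt hs)).differentiableAt.differentiableWithinAt
    · intro s hs
      rw [interior_Ici] at hs
      rw [(hGd s (le_of_lt hs)).deriv]
      have h1 := hUle s (le_of_lt hs)
      have h2 : lam * (c / lam) = c := by field_simp
      have h3 : Real.exp (lam * s) * lam * (U s - (ε + c / lam)) +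
          Real.exp (lam * s) * (V' s / (2 * U s)) =
          Real.exp (lam * s) * (lam * U s - lam * ε - lam * (c / lam) + V' s / (2 * U s)) := by
        ring
      rw [h3, h2]
      exact mul_nonpos_of_nonneg_of_nonpos (Real.exp_pos _).le (by linarith)
  have hG0 : G t ≤ G 0 := hanti (Set.mem_Ici.2 le_rfl) (Set.mem_Ici.2 ht) ht
  have hmul := mul_le_mul_of_nonneg_left hG0 (Real.exp_pos (-lam * t)).le
  have hexp : Real.exp (-lam * t) * Real.exp (lam * t) = 1 := by
    rw [← Real.exp_add]; simp
  simp only [hG, mul_zero, Real.exp_zero, one_mul, ← mul_assoc, hexp] at hmul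
  have hU0 : U 0 ≤ √(V 0) + ε := by
    refine Real.sqrt_le_iff.2 ⟨by positivity, ?_⟩
    nlinarith [Real.sq_sqrt (hV 0), Real.sqrt_nonneg (V 0)]
  have hE1 : Real.exp (-lam * t) ≤ 1 := Real.exp_le_one_iff.2 (by nlinarith)
  have hE0 := Real.exp_pos (-lam * t)
  have hcl : 0 ≤ c / lam := by positivity
  have h5 := mul_le_mul_of_nonneg_left hU0 hE0.le
  have h6 := hVU t
  nlinarith [mul_nonneg hE0.le hcl]

/-- Cauchy–Schwarz inequality for the positive semidefinite form `⟪T ·, ·⟫`. -/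
lemma inner_le_sqrt_mul_sqrt_of_symmetric {E : Type*} [NormedAddCommGroup E]
    [InnerProductSpace ℝ E] {T : E →ₗ[ℝ] E} (hT : T.IsSymmetric) (hpos : ∀ v, 0 ≤ ⟪T v, v⟫)
    (u v : E) : ⟪T u, v⟫ ≤ √⟪T u, u⟫ * √⟪T v, v⟫ := by
  have hvu : ⟪T v, u⟫ = ⟪T u, v⟫ := by rw [hT, real_inner_comm]
  have h : ∀ s : ℝ, 0 ≤ ⟪T v, v⟫ * (s * s) + 2 * ⟪T u, v⟫ * s + ⟪T u, u⟫ := by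
    intro s
    have := hpos (u + s • v)
    simp only [map_add, map_smul, inner_add_left, inner_add_right, real_inner_smul_left,
      real_inner_smul_right, hvu] at this
    linarith
  have hdis := discrim_le_zero h
  unfold discrim at hdis
  rw [← Real.sqrt_mul (hpos u)]
  exact Real.le_sqrt_of_sq_le (by nlinarith)

/-- Metric version of the bounded-disturbance robustness bound (equation (9)):
the steady-state deviation caused by a disturbance of size `d̄` is at most `χ d̄/λ`,
where `χ = √(m₂/m₁)` is the condition number of the metric. -/
theorem stmt_5 {n : ℕ} (M : Matrix (Fin n) (Fin n) ℝ) (hMsymm : M.IsSymm) (hMpd : M.PosDef)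
    (m₁ m₂ : ℝ) (hm₁ : 0 < m₁) (hm₁₂ : m₁ ≤ m₂)
    (hlow : ∀ v : EuclideanSpace ℝ (Fin n), m₁ * ‖v‖ ^ 2 ≤ ⟪Matrix.toEuclideanLin M v, v⟫)
    (hhigh : ∀ v : EuclideanSpace ℝ (Fin n), ⟪Matrix.toEuclideanLin M v, v⟫ ≤ m₂ * ‖v‖ ^ 2)
    (lam db : ℝ) (hlam : 0 < lam) (hdb : 0 ≤ db)
    (f d : EuclideanSpace ℝ (Fin n) → ℝ → EuclideanSpace ℝ (Fin n))
    (hf : ∀ t ≥ (0:ℝ), ∀ a b : EuclideanSpace ℝ (Fin n),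
      ⟪Matrix.toEuclideanLin M (f a t - f b t), a - b⟫ ≤
        -lam * ⟪Matrix.toEuclideanLin M (a - b), a - b⟫)
    (hd : ∀ (a : EuclideanSpace ℝ (Fin n)) (t : ℝ), ‖d a t‖ ≤ db)
    (x xp : ℝ → EuclideanSpace ℝ (Fin n))
    (hx : ∀ t ≥ (0:ℝ), HasDerivAt x (f (x t) t) t)
    (hxp : ∀ t ≥ (0:ℝ), HasDerivAt xp (f (xp t) t + d (xp t) t) t) :
    (∀ t ≥ (0:ℝ), ‖xp t - x t‖ ≤
        Real.sqrt (m₂ / m₁) * Real.exp (-lam * t) * ‖xp 0 - x 0‖ +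
          Real.sqrt (m₂ / m₁) * db / lam) ∧
    Filter.limsup (fun t => ‖xp t - x t‖) Filter.atTop ≤ Real.sqrt (m₂ / m₁) * db / lam := by
  set T := Matrix.toEuclideanLin M with hTdef
  have hT : T.IsSymmetric := Matrix.isSymmetric_toEuclideanLin_iff.2 hMpd.isHermitian
  have hpos : ∀ v, 0 ≤ ⟪T v, v⟫ := fun v => le_trans (by positivity) (hlow v)
  have hm₂ : 0 < m₂ := hm₁.trans_le hm₁₂
  have hupper : ∀ v, √⟪T v, v⟫ ≤ √m₂ * ‖v‖ := fun v => by
    refine Real.sqrt_le_iff.2 ⟨by positivity, ?_⟩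
    rw [mul_pow, Real.sq_sqrt hm₂.le]
    exact hhigh v
  have hlower : ∀ v, √m₁ * ‖v‖ ≤ √⟪T v, v⟫ := fun v => by
    refine Real.le_sqrt_of_sq_le ?_
    rw [mul_pow, Real.sq_sqrt hm₁.le]
    exact hlow v
  have hderiv : ∀ t ≥ (0:ℝ), HasDerivAt (fun s => ⟪T (xp s - x s), xp s - x s⟫)
      (2 * ⟪T (f (xp t) t + d (xp t) t - f (x t) t), xp t - x t⟫) t := by
    intro t ht
    have he := (hxp t ht).sub (hx t ht)
    have hTe := (LinearMap.toContinuousLinearMap T).hasFDerivAt.comp_hasDerivAt t he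
    refine (hTe.inner ℝ he).congr_deriv ?_
    simp only [LinearMap.coe_toContinuousLinearMap', Function.comp_apply, Pi.sub_apply]
    rw [hT (xp t - x t), real_inner_comm]
    ring
  have hle : ∀ t ≥ (0:ℝ), 2 * ⟪T (f (xp t) t + d (xp t) t - f (x t) t), xp t - x t⟫ ≤
      -2 * lam * ⟪T (xp t - x t), xp t - x t⟫ +
        2 * (√m₂ * db) * √⟪T (xp t - x t), xp t - x t⟫ := by
    intro t ht
    have h1 := hf t ht (xp t) (x t)
    have h2 : ⟪T (d (xp t) t), xp t - x t⟫ ≤ √m₂ * db * √⟪T (xp t - x t), xp t - x t⟫ := by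
      refine (inner_le_sqrt_mul_sqrt_of_symmetric hT hpos _ _).trans ?_
      gcongr
      exact (hupper _).trans (by gcongr; exact hd _ _)
    have h3 : f (xp t) t + d (xp t) t - f (x t) t =
        (f (xp t) t - f (x t) t) + d (xp t) t := by abel
    rw [h3, map_add, inner_add_left]
    linarith
  have hmain : ∀ t ≥ (0:ℝ), ‖xp t - x t‖ ≤
      √(m₂ / m₁) * Real.exp (-lam * t) * ‖xp 0 - x 0‖ + √(m₂ / m₁) * db / lam := by
    intro t ht
    have h1 := sqrt_le_of_deriv_le hlam (by positivity : 0 ≤ √m₂ * db)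
      (fun s => hpos (xp s - x s)) hderiv hle ht
    have h2 := mul_le_mul_of_nonneg_left (hupper (xp 0 - x 0)) (Real.exp_pos (-lam * t)).le
    have hs₁ : 0 < √m₁ := Real.sqrt_pos.2 hm₁
    have h3 : √m₁ * ‖xp t - x t‖ ≤
        Real.exp (-lam * t) * (√m₂ * ‖xp 0 - x 0‖) + √m₂ * db / lam :=
      (hlower _).trans (h1.trans (by linarith))
    rw [Real.sqrt_div hm₂.le]
    refine le_of_mul_le_mul_left (h3.trans_eq ?_) hs₁
    field_simp
  refine ⟨hmain, ?_⟩
  have hlim : Filter.Tendsto (fun t : ℝ => √(m₂ / m₁) * Real.exp (-lam * t) * ‖xp 0 - x 0‖ +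
      √(m₂ / m₁) * db / lam) Filter.atTop (nhds (√(m₂ / m₁) * db / lam)) := by
    have h1 : Filter.Tendsto (fun t : ℝ => Real.exp (-lam * t)) Filter.atTop (nhds 0) :=
      Real.tendsto_exp_atBot.comp
        (Filter.tendsto_id.const_mul_atTop_of_neg (neg_lt_zero.2 hlam))
    simpa using ((h1.const_mul (√(m₂ / m₁))).mul_const ‖xp 0 - x 0‖).add_const
      (√(m₂ / m₁) * db / lam)
  rw [← hlim.limsup_eq]
  -- In `ℝ` the limsup is meaningful only under boundedness: below by `0`, above by convergence.
  refine Filter.limsup_le_limsup ?_ ?_ hlim.isBoundedUnder_le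
  · filter_upwards [Filter.eventually_ge_atTop (0:ℝ)] with t ht using hmain t ht
  · exact Filter.IsCoboundedUnder.of_frequently_ge
      (Filter.Frequently.of_forall fun t => norm_nonneg (xp t - x t))
end

section
/- Let λ_z > 0, L₁ ≥ 0, d₁ ≥ 0, μ ∈ (0,1]. Let g : ℝⁿ × ℝᵐ × ℝ → ℝᵐ and let h : ℝⁿ → ℝᵐ be differentiable with g(a, h(a), 0) = 0 for all a ∈ ℝⁿ. Assume: (i) for all a ∈ ℝⁿ, ν ∈ ℝ, and z₁, z₂ ∈ ℝᵐ, ⟨g(a, z₁, ν) − g(a, z₂, ν), z₁ − z₂⟩ ≤ −λ_z ‖z₁ − z₂‖²; (ii) for all a, w, ‖g(a, w, μ) − g(a, w, 0)‖ ≤ L₁ μ. Let x : [0,∞) → ℝⁿ be differentiable with ‖Dh(x(t))(x′(t))‖ ≤ d₁ for all t ≥ 0, and let z : [0,∞) → ℝᵐ be differentiable with μ z′(t) = g(x(t), z(t), μ) for all t ≥ 0. Then for all t ≥ 0, ‖z(t) − h(x(t))‖ ≤ e^{−(λ_z/μ) t} ‖z(0) − h(x(0))‖ + (μ (d₁ +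 L₁)/λ_z)(1 − e^{−(λ_z/μ) t}); in particular limsup_{t→∞} ‖z(t) − h(x(t))‖ ≤ μ(d₁ + L₁)/λ_z. -/
/-!
Write `e t = z t - h (x t)`. Splitting
`g(x, z, μ) = (g(x, z, μ) - g(x, h(x), μ)) + (g(x, h(x), μ) - g(x, h(x), 0))`, contraction controls
the first bracket and the Lipschitz bound in `μ` the second; with the drift bound this gives
`⟪e', e⟫ ≤ -(λ/μ) ‖e‖² + (d₁ + L₁) ‖e‖`. The comparison lemma
`norm_le_of_inner_deriv_le` turns such an inequality into the exponential bound on `‖e‖`. The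
limsup bound follows by letting `t → ∞`.
-/

open scoped RealInnerProductSpace

/-- A one-sided Grönwall estimate. As `‖e‖` need not be differentiable where `e = 0`, the
comparison is made between `‖e‖²` and the square of a strictly positive, strict supersolution of
`b' = -c b + D`, obtained by enlarging the initial value and `D` by `ε`; then `ε → 0`. -/
theorem norm_le_of_inner_deriv_le {E : Type*} [NormedAddCommGroup E] [InnerProductSpace ℝ E]
    {c D : ℝ} (hc : 0 < c) (hD : 0 ≤ D) {e e' : ℝ → E}
    (he : ∀ t ≥ (0:ℝ), HasDerivAt e (e' t) t)
    (hin : ∀ t ≥ (0:ℝ), ⟪e' t, e t⟫ ≤ -c * ‖e t‖ ^ 2 + D * ‖e t‖) {t : ℝ} (ht : 0 ≤ t) :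
    ‖e t‖ ≤ Real.exp (-c * t) * ‖e 0‖ + D / c * (1 - Real.exp (-c * t)) := by
  have key : ∀ ε > (0:ℝ), ‖e t‖ ≤
      Real.exp (-c * t) * (‖e 0‖ + ε) + (D + ε) / c * (1 - Real.exp (-c * t)) := by
    intro ε hε
    set b : ℝ → ℝ := fun s =>
      Real.exp (-c * s) * (‖e 0‖ + ε) + (D + ε) / c * (1 - Real.exp (-c * s)) with hb
    have hbpos : ∀ s ≥ (0:ℝ), 0 < b s := by
      intro s hs
      have h1 : Real.exp (-c * s) ≤ 1 := Real.exp_le_one_iff.2 (by nlinarith)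
      have h2 : 0 ≤ 1 - Real.exp (-c * s) := by linarith
      simp only [hb]
      positivity
    have hbder : ∀ s, HasDerivAt b (-c * b s + (D + ε)) s := by
      intro s
      have h1 : HasDerivAt (fun s => Real.exp (-c * s)) (Real.exp (-c * s) * (-c)) s := by
        simpa using ((hasDerivAt_id s).const_mul (-c)).exp
      have h2 := (h1.mul_const (‖e 0‖ + ε)).add ((h1.const_sub 1).const_mul ((D + ε) / c))
      refine h2.congr_deriv ?_
      simp only [hb]
      field_simp
      ring
    have hf : ∀ s ≥ (0:ℝ), HasDerivAt (fun s => ‖e s‖ ^ 2) (2 * ⟪e s, e' s⟫) s :=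
      fun s hs => (he s hs).norm_sq
    have hsq : ‖e t‖ ^ 2 ≤ b t ^ 2 := by
      refine image_le_of_deriv_right_lt_deriv_boundary (a := 0) (b := t)
        (f := fun s => ‖e s‖ ^ 2) (B := fun s => b s ^ 2)
        (fun s hs => (hf s hs.1).continuousAt.continuousWithinAt)
        (fun s hs => (hf s hs.1).hasDerivWithinAt) ?_ (fun s => (hbder s).pow 2) ?_
        (Set.right_mem_Icc.2 ht)
      · have : b 0 = ‖e 0‖ + ε := by simp [hb]
        simp only [this]
        gcongr
        linarith
      · intro s hs hEq
        have hbp := hbpos s hs.1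
        have hEq' : ‖e s‖ = b s := (sq_eq_sq₀ (norm_nonneg _) hbp.le).1 hEq
        have h1 := hin s hs.1
        rw [real_inner_comm, hEq'] at h1
        have h2 : 0 < b s * ε := mul_pos hbp hε
        norm_num
        nlinarith
    exact (sq_le_sq₀ (norm_nonneg _) (hbpos t ht).le).1 hsq
  have hcont : Continuous fun ε : ℝ =>
      Real.exp (-c * t) * (‖e 0‖ + ε) + (D + ε) / c * (1 - Real.exp (-c * t)) := by fun_prop
  have hlim := (hcont.tendsto 0).mono_left (nhdsWithin_le_nhds (s := Set.Ioi 0))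
  simp only [add_zero] at hlim
  exact ge_of_tendsto hlim (Filter.eventually_of_mem self_mem_nhdsWithin key)

/-- The fast-variable bound of Theorem 1 (equation (13), condition number `χ_z = 1`):
the fast state `z` converges to the slow manifold `h(x)` up to an ultimate bound
`μ(d₁ + L₁)/λ_z`. -/
theorem stmt_8 {n m : ℕ} (lamz L₁ d₁ mu : ℝ)
    (hlamz : 0 < lamz) (hL₁ : 0 ≤ L₁) (hd₁ : 0 ≤ d₁) (hmu0 : 0 < mu) (hmu1 : mu ≤ 1)
    (g : EuclideanSpace ℝ (Fin n) → EuclideanSpace ℝ (Fin m) → ℝ → EuclideanSpace ℝ (Fin m))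
    (h : EuclideanSpace ℝ (Fin n) → EuclideanSpace ℝ (Fin m))
    (hdiff : Differentiable ℝ h)
    (hroot : ∀ a, g a (h a) 0 = 0)
    (hcontr : ∀ (a : EuclideanSpace ℝ (Fin n)) (ν : ℝ) (z₁ z₂ : EuclideanSpace ℝ (Fin m)),
      ⟪g a z₁ ν - g a z₂ ν, z₁ - z₂⟫ ≤ -lamz * ‖z₁ - z₂‖ ^ 2)
    (hLip : ∀ (a : EuclideanSpace ℝ (Fin n)) (w : EuclideanSpace ℝ (Fin m)),
      ‖g a w mu - g a w 0‖ ≤ L₁ * mu)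
    (x x' : ℝ → EuclideanSpace ℝ (Fin n))
    (hx : ∀ t ≥ (0:ℝ), HasDerivAt x (x' t) t)
    (hdrift : ∀ t ≥ (0:ℝ), ‖fderiv ℝ h (x t) (x' t)‖ ≤ d₁)
    (z z' : ℝ → EuclideanSpace ℝ (Fin m))
    (hz : ∀ t ≥ (0:ℝ), HasDerivAt z (z' t) t)
    (hzeq : ∀ t ≥ (0:ℝ), mu • z' t = g (x t) (z t) mu) :
    (∀ t ≥ (0:ℝ), ‖z t - h (x t)‖ ≤
        Real.exp (-(lamz / mu) * t) * ‖z 0 - h (x 0)‖ +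
          mu * (d₁ + L₁) / lamz * (1 - Real.exp (-(lamz / mu) * t))) ∧
    Filter.limsup (fun t => ‖z t - h (x t)‖) Filter.atTop ≤ mu * (d₁ + L₁) / lamz := by
  have hmain : ∀ t ≥ (0:ℝ), ‖z t - h (x t)‖ ≤
        Real.exp (-(lamz / mu) * t) * ‖z 0 - h (x 0)‖ +
          mu * (d₁ + L₁) / lamz * (1 - Real.exp (-(lamz / mu) * t)) := by
    intro t ht
    have hder : ∀ s ≥ (0:ℝ), HasDerivAt (fun s => z s - h (x s))
        (z' s - fderiv ℝ h (x s) (x' s)) s := fun s hs =>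
      (hz s hs).sub ((hdiff (x s)).hasFDerivAt.comp_hasDerivAt s (hx s hs))
    have hin : ∀ s ≥ (0:ℝ), ⟪z' s - fderiv ℝ h (x s) (x' s), z s - h (x s)⟫ ≤
        -(lamz / mu) * ‖z s - h (x s)‖ ^ 2 + (d₁ + L₁) * ‖z s - h (x s)‖ := by
      intro s hs
      have hcon := hcontr (x s) mu (z s) (h (x s))
      have hL := hLip (x s) (h (x s))
      rw [hroot, sub_zero] at hL
      rw [← hzeq s hs, inner_sub_left, real_inner_smul_left] at hcon
      rw [inner_sub_left]
      set e := z s - h (x s)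
      have h1 : ⟪g (x s) (h (x s)) mu, e⟫ ≤ L₁ * mu * ‖e‖ :=
        (real_inner_le_norm _ _).trans (by gcongr)
      have h2 : -⟪fderiv ℝ h (x s) (x' s), e⟫ ≤ d₁ * ‖e‖ := by
        rw [← inner_neg_left]
        refine (real_inner_le_norm _ _).trans ?_
        rw [norm_neg]
        gcongr
        exact hdrift s hs
      have h3 : ⟪z' s, e⟫ ≤ -(lamz / mu) * ‖e‖ ^ 2 + L₁ * ‖e‖ := by
        refine le_of_mul_le_mul_left ?_ hmu0
        have : mu * (-(lamz / mu) * ‖e‖ ^ 2 + L₁ * ‖e‖)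
            = -lamz * ‖e‖ ^ 2 + L₁ * mu * ‖e‖ := by
          field_simp
        rw [this]
        linarith
      linarith
    have hfin := norm_le_of_inner_deriv_le (div_pos hlamz hmu0) (add_nonneg hd₁ hL₁) hder hin ht
    have hconst : (d₁ + L₁) / (lamz / mu) = mu * (d₁ + L₁) / lamz := by
      field_simp
    rwa [hconst] at hfin
  refine ⟨hmain, ?_⟩
  have hexp : Filter.Tendsto (fun t : ℝ => Real.exp (-(lamz / mu) * t)) Filter.atTop (nhds 0) :=
    Real.tendsto_exp_atBot.comp
      (Filter.tendsto_id.const_mul_atTop_of_neg (neg_lt_zero.2 (div_pos hlamz hmu0)))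
  have hlim := (hexp.mul_const ‖z 0 - h (x 0)‖).add
    ((hexp.const_sub 1).const_mul (mu * (d₁ + L₁) / lamz))
  simp only [zero_mul, sub_zero, mul_one, zero_add] at hlim
  rw [← hlim.limsup_eq]
  -- Nonnegativity of the norm and convergence of the bound rule out junk values of `limsup`.
  refine Filter.limsup_le_limsup ?_ ?_ hlim.isBoundedUnder_le
  · filter_upwards [Filter.eventually_ge_atTop (0:ℝ)] with t ht using hmain t ht
  · exact Filter.isCoboundedUnder_le_of_le Filter.atTop (x := 0) fun t => norm_nonneg _
end

section
/- Let λₓ > 0, λ_z > 0, L > 0, μ ∈ (0,1] with λ_z ≠ μ λₓ, and c₀, c₁ ≥ 0. Let f : ℝⁿ × ℝᵐ → ℝⁿ and h : ℝⁿ → ℝᵐ, and assume: (i) the reduced vector field f_r(a) := f(a, h(a)) satisfies ⟨f_r(a) − f_r(b), a − b⟩ ≤ −λₓ‖a − b‖² for all a, b ∈ ℝⁿ; (ii) ‖f(a, z₁) − f(a, z₂)‖ ≤ L‖z₁ − z₂‖ for all a, z₁, z₂. Let x : [0,∞) → ℝⁿ and z : [0,∞) → ℝᵐ be differentiable with x′(t)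 = f(x(t), z(t)) and ‖z(t) − h(x(t))‖ ≤ c₀ e^{−(λ_z/μ) t} + μ c₁ for all t ≥ 0, and let x_r : [0,∞) → ℝⁿ solve x_r′(t) = f_r(x_r(t)). Then for all t ≥ 0, ‖x(t) − x_r(t)‖ ≤ e^{−λₓ t}‖x(0) − x_r(0)‖ + (L c₀ μ/(λ_z − μλₓ))(e^{−λₓ t} − e^{−(λ_z/μ) t}) + (μ L c₁/λₓ)(1 − e^{−λₓ t}); in particular limsup_{t→∞} ‖x(t) − x_r(t)‖ ≤ μ L c₁ / λₓ. -/
/-!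
The error `e = x - xr` satisfies `⟪e', e⟫ ≤ -lamx ‖e‖² + d ‖e‖`, where
`d t = L (c₀ exp (-(lamz / mu) t) + mu c₁)`: contraction controls
`f x (h x) - f xr (h xr)`, and the Lipschitz bound controls `f x z - f x (h x)`. Formally this
says `‖e‖' ≤ -lamx ‖e‖ + d`, and the claimed bound is the explicit solution of
`R' = -lamx R + d`, `R 0 = ‖x 0 - xr 0‖`. Since the norm is not differentiable where `e`
vanishes, the comparison (`norm_le_of_inner_deriv_le`) is carried out for `√(‖e‖² + ε²)`, with
`ε → 0` at the end. The limsup bound follows as `R t → mu L c₁ / lamx`.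
-/

/-- Comparison principle for the norm of a curve: the differential inequality
`‖e‖' ≤ -lam ‖e‖ + d`, in the form obtained after multiplying by `‖e‖`, forces `‖e‖` to stay
below any solution `R` of `R' = -lam R + d` that starts above `‖e 0‖`. -/
theorem norm_le_of_inner_deriv_le_s9 {E : Type*} [NormedAddCommGroup E] [InnerProductSpace ℝ E]
    {lam : ℝ} (hlam : 0 < lam) {e e' : ℝ → E} {d R : ℝ → ℝ}
    (he : ∀ t ≥ (0:ℝ), HasDerivAt e (e' t) t)
    (hd : ∀ t ≥ (0:ℝ), 0 ≤ d t)
    (hin : ∀ t ≥ (0:ℝ), inner ℝ (e' t) (e t) ≤ -lam * ‖e t‖ ^ 2 + d t * ‖e t‖)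
    (hR : ∀ t ≥ (0:ℝ), HasDerivAt R (-lam * R t + d t) t)
    (h0 : ‖e 0‖ ≤ R 0) {t : ℝ} (ht : 0 ≤ t) : ‖e t‖ ≤ R t := by
  refine le_of_forall_pos_le_add fun ε hε => ?_
  set w : ℝ → ℝ := fun s => Real.sqrt (‖e s‖ ^ 2 + ε ^ 2) with hw
  have hwpos : ∀ s, 0 < w s := fun s => Real.sqrt_pos.2 (by positivity)
  have hwsq : ∀ s, w s ^ 2 = ‖e s‖ ^ 2 + ε ^ 2 := fun s => Real.sq_sqrt (by positivity)
  have hew : ∀ s, ‖e s‖ ≤ w s := fun s => Real.le_sqrt_of_sq_le (by nlinarith [sq_nonneg ε])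
  have hεw : ∀ s, ε ≤ w s := fun s => Real.le_sqrt_of_sq_le (by nlinarith [sq_nonneg ‖e s‖])
  have hwd : ∀ s ≥ (0:ℝ), HasDerivAt w (inner ℝ (e' s) (e s) / w s) s := by
    intro s hs
    have h1 := (((he s hs).norm_sq).add_const (ε ^ 2)).sqrt
      (by positivity : ‖e s‖ ^ 2 + ε ^ 2 ≠ 0)
    convert h1 using 1
    rw [real_inner_comm, mul_div_mul_left _ _ two_ne_zero]
  have hwle : ∀ s ≥ (0:ℝ), inner ℝ (e' s) (e s) / w s ≤ -lam * w s + lam * ε + d s := by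
    intro s hs
    rw [div_le_iff₀ (hwpos s)]
    have h1 := mul_le_mul_of_nonneg_left (hew s) (hd s hs)
    have h2 := mul_le_mul_of_nonneg_left (hεw s) (mul_pos hlam hε).le
    have h3 := hin s hs
    nlinarith [hwsq s]
  have hG : ∀ s ≥ (0:ℝ), HasDerivAt (fun s => Real.exp (lam * s) * (w s - (R s + ε)))
      (Real.exp (lam * s) *
        (inner ℝ (e' s) (e s) / w s - (-lam * w s + lam * ε + d s))) s := by
    intro s hs
    have h1 : HasDerivAt (fun s => Real.exp (lam * s)) (Real.exp (lam * s) * (lam * 1)) s :=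
      ((hasDerivAt_id s).const_mul lam).exp
    refine (h1.mul ((hwd s hs).sub ((hR s hs).add_const ε))).congr_deriv ?_
    simp only [Pi.sub_apply]
    ring
  have hanti : AntitoneOn (fun s => Real.exp (lam * s) * (w s - (R s + ε))) (Set.Ici 0) := by
    refine antitoneOn_of_deriv_nonpos (convex_Ici 0)
      (fun s hs => (hG s hs).continuousAt.continuousWithinAt)
      (fun s hs => (hG s (interior_subset hs)).differentiableAt.differentiableWithinAt)
      (fun s hs => ?_)
    have hs' : 0 ≤ s := interior_subset hs
    rw [(hG s hs').deriv]
    exact mul_nonpos_of_nonneg_of_nonpos (Real.exp_pos _).le (sub_nonpos.2 (hwle s hs'))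
  have hw0 : w 0 ≤ ‖e 0‖ + ε :=
    Real.sqrt_le_iff.2 ⟨by positivity, by nlinarith [mul_nonneg (norm_nonneg (e 0)) hε.le]⟩
  have hle := hanti (Set.mem_Ici.2 le_rfl) (Set.mem_Ici.2 ht) ht
  simp only [mul_zero, Real.exp_zero, one_mul] at hle
  have hneg : Real.exp (lam * t) * (w t - (R t + ε)) ≤ 0 := by linarith
  have := nonpos_of_mul_nonpos_right hneg (Real.exp_pos _)
  linarith [hew t]

open scoped RealInnerProductSpace

/-- The slow-variable bound of Theorem 1 (equations (14)–(16), condition numbers 1):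
the slow trajectory converges to the reduced-system trajectory up to an ultimate bound
proportional to `μ`. -/
theorem stmt_9 {n m : ℕ} (lamx lamz L mu c₀ c₁ : ℝ)
    (hlamx : 0 < lamx) (hlamz : 0 < lamz) (hL : 0 < L)
    (hmu0 : 0 < mu) (hmu1 : mu ≤ 1) (hne : lamz ≠ mu * lamx)
    (hc₀ : 0 ≤ c₀) (hc₁ : 0 ≤ c₁)
    (f : EuclideanSpace ℝ (Fin n) → EuclideanSpace ℝ (Fin m) → EuclideanSpace ℝ (Fin n))
    (h : EuclideanSpace ℝ (Fin n) → EuclideanSpace ℝ (Fin m))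
    (hcontr : ∀ a b : EuclideanSpace ℝ (Fin n),
      ⟪f a (h a) - f b (h b), a - b⟫ ≤ -lamx * ‖a - b‖ ^ 2)
    (hLip : ∀ (a : EuclideanSpace ℝ (Fin n)) (z₁ z₂ : EuclideanSpace ℝ (Fin m)),
      ‖f a z₁ - f a z₂‖ ≤ L * ‖z₁ - z₂‖)
    (x : ℝ → EuclideanSpace ℝ (Fin n)) (z : ℝ → EuclideanSpace ℝ (Fin m))
    (hx : ∀ t ≥ (0:ℝ), HasDerivAt x (f (x t) (z t)) t)
    (hzdiff : ∀ t ≥ (0:ℝ), DifferentiableAt ℝ z t)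
    (hzbnd : ∀ t ≥ (0:ℝ), ‖z t - h (x t)‖ ≤ c₀ * Real.exp (-(lamz / mu) * t) + mu * c₁)
    (xr : ℝ → EuclideanSpace ℝ (Fin n))
    (hxr : ∀ t ≥ (0:ℝ), HasDerivAt xr (f (xr t) (h (xr t))) t) :
    (∀ t ≥ (0:ℝ), ‖x t - xr t‖ ≤
        Real.exp (-lamx * t) * ‖x 0 - xr 0‖ +
          L * c₀ * mu / (lamz - mu * lamx) *
            (Real.exp (-lamx * t) - Real.exp (-(lamz / mu) * t)) +
          mu * L * c₁ / lamx * (1 - Real.exp (-lamx * t))) ∧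
    Filter.limsup (fun t => ‖x t - xr t‖) Filter.atTop ≤ mu * L * c₁ / lamx := by
  have hgap : lamz - mu * lamx ≠ 0 := sub_ne_zero.2 hne
  have hmain : ∀ t ≥ (0:ℝ), ‖x t - xr t‖ ≤
        Real.exp (-lamx * t) * ‖x 0 - xr 0‖ +
          L * c₀ * mu / (lamz - mu * lamx) *
            (Real.exp (-lamx * t) - Real.exp (-(lamz / mu) * t)) +
          mu * L * c₁ / lamx * (1 - Real.exp (-lamx * t)) := by
    intro t ht
    refine norm_le_of_inner_deriv_le_s9 (e := fun t => x t - xr t)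
      (R := fun t => Real.exp (-lamx * t) * ‖x 0 - xr 0‖ +
          L * c₀ * mu / (lamz - mu * lamx) *
            (Real.exp (-lamx * t) - Real.exp (-(lamz / mu) * t)) +
          mu * L * c₁ / lamx * (1 - Real.exp (-lamx * t)))
      (d := fun t => L * (c₀ * Real.exp (-(lamz / mu) * t) + mu * c₁))
      hlamx (fun s hs => (hx s hs).sub (hxr s hs)) (fun s _ => by positivity) ?_ ?_ ?_ ht
    · intro s hs
      have hsplit : f (x s) (z s) - f (xr s) (h (xr s)) =
          (f (x s) (h (x s)) - f (xr s) (h (xr s))) + (f (x s) (z s) - f (x s) (h (x s))) := by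
        abel
      rw [hsplit, inner_add_left]
      refine add_le_add (hcontr _ _) ((real_inner_le_norm _ _).trans ?_)
      refine mul_le_mul_of_nonneg_right ((hLip _ _ _).trans ?_) (norm_nonneg _)
      exact mul_le_mul_of_nonneg_left (hzbnd s hs) hL.le
    · intro s _
      have hexp : ∀ a : ℝ, HasDerivAt (fun s => Real.exp (a * s)) (Real.exp (a * s) * (a * 1)) s :=
        fun a => ((hasDerivAt_id s).const_mul a).exp
      refine ((((hexp (-lamx)).mul_const _).add
        (((hexp (-lamx)).sub (hexp (-(lamz / mu)))).const_mul _)).add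
        (((hexp (-lamx)).const_sub 1).const_mul _)).congr_deriv ?_
      generalize Real.exp (-lamx * s) = p
      generalize Real.exp (-(lamz / mu) * s) = q
      generalize ‖x 0 - xr 0‖ = r
      generalize hg : lamz - mu * lamx = g at hgap
      obtain rfl : lamz = g + mu * lamx := by linarith
      field_simp
      ring
    · simp
  refine ⟨hmain, ?_⟩
  have hexp : ∀ a : ℝ, 0 < a →
      Filter.Tendsto (fun t : ℝ => Real.exp (-a * t)) Filter.atTop (nhds 0) := fun a ha =>
    Real.tendsto_exp_atBot.comp (Filter.tendsto_id.const_mul_atTop_of_neg (neg_lt_zero.2 ha))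
  have hlim : Filter.Tendsto (fun t => Real.exp (-lamx * t) * ‖x 0 - xr 0‖ +
          L * c₀ * mu / (lamz - mu * lamx) *
            (Real.exp (-lamx * t) - Real.exp (-(lamz / mu) * t)) +
          mu * L * c₁ / lamx * (1 - Real.exp (-lamx * t))) Filter.atTop
        (nhds (mu * L * c₁ / lamx)) := by
    have h1 := hexp lamx hlamx
    have h2 := hexp (lamz / mu) (div_pos hlamz hmu0)
    simpa using ((h1.mul_const ‖x 0 - xr 0‖).add
      ((h1.sub h2).const_mul (L * c₀ * mu / (lamz - mu * lamx)))).add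
      ((h1.const_sub 1).const_mul (mu * L * c₁ / lamx))
  rw [← hlim.limsup_eq]
  exact Filter.limsup_le_limsup (Filter.eventually_atTop.2 ⟨0, hmain⟩)
    (Filter.isCoboundedUnder_le_of_le Filter.atTop (x := 0) fun t => norm_nonneg _)
    hlim.isBoundedUnder_le
end

section
/- Let λ_z > 0, d_q ≥ 0 and 0 < μ < λ_z/d_q (with the convention that any μ ∈ (0,1] is allowed when d_q = 0). Let f : ℝⁿ × ℝᵐ → ℝⁿ, g : ℝⁿ × ℝᵐ → ℝᵐ (independent of μ), and h : ℝⁿ → ℝᵐ differentiable with g(a, h(a)) = 0 for all a. Define Q(a, w) := Dh(a)(f(a, w)) and assume: (i) ⟨g(a, z₁) − g(a, z₂), z₁ − z₂⟩ ≤ −λ_z‖z₁ − z₂‖² for all a, z₁, z₂; (ii) ‖Q(a, z₁) − Q(a, z₂)‖ ≤ d_q‖z₁ − z₂‖ for all a, z₁, z₂; (iii) Q(a, h(a)) = 0 for all a. If x : [0,∞) → ℝⁿ and z : [0,∞) → ℝᵐ are differentiable with x′(t) = f(x(t), z(t)) and μ z′(t) = g(x(t), z(t)) for all t ≥ 0,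 then ‖z(t) − h(x(t))‖ ≤ e^{−((λ_z − μ d_q)/μ) t} ‖z(0) − h(x(0))‖ for all t ≥ 0; in particular ‖z(t) − h(x(t))‖ → 0 exponentially as t → ∞. -/
/-!
The error `e t = z t - h (x t)` satisfies `e' = μ⁻¹ g(x, z) - Dh(x) f(x, z)`. Since `g` and the drift
`Q(a, w) = Dh(a) f(a, w)` both vanish on the slow manifold, contraction of `g` and the Lipschitz
bound on `Q` give `⟪e, e'⟫ ≤ -c ‖e‖ ^ 2` with `c = (λ_z - μ d_q) / μ > 0`. The bound then follows from
the monotonicity of `t ↦ ‖exp (c t) • e t‖ ^ 2` (`norm_le_exp_mul_of_inner_deriv_le`).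
-/

open scoped RealInnerProductSpace

/-- Exponential decay from a dissipation inequality. Working with the rescaled curve
`exp (c t) • e t` and its squared norm avoids differentiating `‖e‖` where `e` vanishes. -/
theorem norm_le_exp_mul_of_inner_deriv_le {E : Type*} [NormedAddCommGroup E]
    [InnerProductSpace ℝ E] {e e' : ℝ → E} {c : ℝ}
    (he : ∀ t ≥ (0:ℝ), HasDerivAt e (e' t) t)
    (hdiss : ∀ t ≥ (0:ℝ), ⟪e t, e' t⟫ ≤ -c * ‖e t‖ ^ 2) {t : ℝ} (ht : 0 ≤ t) :
    ‖e t‖ ≤ Real.exp (-c * t) * ‖e 0‖ := by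
  have hexp : ∀ s : ℝ, HasDerivAt (fun s => Real.exp (c * s)) (Real.exp (c * s) * c) s := by
    intro s
    simpa using ((hasDerivAt_id s).const_mul c).exp
  have hw : ∀ s ≥ (0:ℝ), HasDerivAt (fun s => ‖Real.exp (c * s) • e s‖ ^ 2)
      (2 * ⟪Real.exp (c * s) • e s,
        Real.exp (c * s) • e' s + (Real.exp (c * s) * c) • e s⟫) s :=
    fun s hs => ((hexp s).smul (he s hs)).norm_sq
  have hanti : AntitoneOn (fun s => ‖Real.exp (c * s) • e s‖ ^ 2) (Set.Ici 0) := by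
    refine antitoneOn_of_hasDerivWithinAt_nonpos (convex_Ici 0)
      (fun s hs => (hw s hs).continuousAt.continuousWithinAt)
      (fun s hs => (hw s (interior_subset hs)).hasDerivWithinAt) ?_
    intro s hs
    have h1 := hdiss s (interior_subset hs)
    have h2 : 2 * ⟪Real.exp (c * s) • e s,
        Real.exp (c * s) • e' s + (Real.exp (c * s) * c) • e s⟫
        = 2 * Real.exp (c * s) ^ 2 * (⟪e s, e' s⟫ + c * ‖e s‖ ^ 2) := by
      simp only [inner_add_right, real_inner_smul_left, real_inner_smul_right,
        real_inner_self_eq_norm_sq]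
      ring
    rw [h2]
    exact mul_nonpos_of_nonneg_of_nonpos (by positivity) (by linarith)
  have h0 := hanti (Set.mem_Ici.2 le_rfl) (Set.mem_Ici.2 ht) ht
  have h1 := (sq_le_sq₀ (norm_nonneg _) (norm_nonneg _)).1 h0
  simp only [norm_smul, Real.norm_eq_abs, Real.abs_exp, mul_zero, Real.exp_zero, abs_one,
    one_mul] at h1
  calc ‖e t‖ = Real.exp (-c * t) * (Real.exp (c * t) * ‖e t‖) := by
        rw [← mul_assoc, ← Real.exp_add]; simp
    _ ≤ _ := by gcongr

/-- The exponential-convergence case (Theorem 2): when the fast dynamics `g` does not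
depend on `μ` and `μ` is below the critical value `λ_z/d_q`, the fast variable converges
exponentially to the slow manifold `h(x)`. -/
theorem stmt_11 {n m : ℕ} (lamz dq mu : ℝ)
    (hlamz : 0 < lamz) (hdq : 0 ≤ dq) (hmu0 : 0 < mu) (hmu : mu * dq < lamz)
    (f : EuclideanSpace ℝ (Fin n) → EuclideanSpace ℝ (Fin m) → EuclideanSpace ℝ (Fin n))
    (g : EuclideanSpace ℝ (Fin n) → EuclideanSpace ℝ (Fin m) → EuclideanSpace ℝ (Fin m))
    (h : EuclideanSpace ℝ (Fin n) → EuclideanSpace ℝ (Fin m))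
    (hdiff : Differentiable ℝ h)
    (hroot : ∀ a, g a (h a) = 0)
    (hcontr : ∀ (a : EuclideanSpace ℝ (Fin n)) (z₁ z₂ : EuclideanSpace ℝ (Fin m)),
      ⟪g a z₁ - g a z₂, z₁ - z₂⟫ ≤ -lamz * ‖z₁ - z₂‖ ^ 2)
    (hQLip : ∀ (a : EuclideanSpace ℝ (Fin n)) (z₁ z₂ : EuclideanSpace ℝ (Fin m)),
      ‖fderiv ℝ h a (f a z₁) - fderiv ℝ h a (f a z₂)‖ ≤ dq * ‖z₁ - z₂‖)
    (hQroot : ∀ a : EuclideanSpace ℝ (Fin n), fderiv ℝ h a (f a (h a)) = 0)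
    (x : ℝ → EuclideanSpace ℝ (Fin n)) (z z' : ℝ → EuclideanSpace ℝ (Fin m))
    (hx : ∀ t ≥ (0:ℝ), HasDerivAt x (f (x t) (z t)) t)
    (hz : ∀ t ≥ (0:ℝ), HasDerivAt z (z' t) t)
    (hzeq : ∀ t ≥ (0:ℝ), mu • z' t = g (x t) (z t)) :
    (∀ t ≥ (0:ℝ), ‖z t - h (x t)‖ ≤
        Real.exp (-((lamz - mu * dq) / mu) * t) * ‖z 0 - h (x 0)‖) ∧
    Filter.Tendsto (fun t => ‖z t - h (x t)‖) Filter.atTop (nhds 0) := by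
  have hbound : ∀ t ≥ (0:ℝ), ‖z t - h (x t)‖ ≤
      Real.exp (-((lamz - mu * dq) / mu) * t) * ‖z 0 - h (x 0)‖ := by
    intro t ht
    refine norm_le_exp_mul_of_inner_deriv_le (e := fun t => z t - h (x t))
      (e' := fun t => z' t - fderiv ℝ h (x t) (f (x t) (z t))) ?_ ?_ ht
    · intro s hs
      exact (hz s hs).sub ((hdiff (x s)).hasFDerivAt.comp_hasDerivAt s (hx s hs))
    · intro s hs
      have h1 := hcontr (x s) (z s) (h (x s))
      rw [hroot, sub_zero, ← hzeq s hs, real_inner_smul_left, real_inner_comm] at h1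
      have h2 := hQLip (x s) (z s) (h (x s))
      rw [hQroot, sub_zero] at h2
      have h3 := (abs_le.1 (abs_real_inner_le_norm (z s - h (x s))
        (fderiv ℝ h (x s) (f (x s) (z s))))).1
      have h4 := mul_le_mul_of_nonneg_left h2 (norm_nonneg (z s - h (x s)))
      have h5 : ⟪z s - h (x s), z' s⟫ ≤ -lamz * ‖z s - h (x s)‖ ^ 2 / mu := by
        rw [le_div_iff₀ hmu0]
        linarith
      have h6 : -((lamz - mu * dq) / mu) * ‖z s - h (x s)‖ ^ 2
          = -lamz * ‖z s - h (x s)‖ ^ 2 / mu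
            + ‖z s - h (x s)‖ * (dq * ‖z s - h (x s)‖) := by
        field_simp
        ring
      rw [inner_sub_right]
      rw [h6]
      linarith
  refine ⟨hbound, ?_⟩
  have hc : -((lamz - mu * dq) / mu) < 0 := neg_neg_of_pos (div_pos (by linarith) hmu0)
  have hlim : Filter.Tendsto
      (fun t => Real.exp (-((lamz - mu * dq) / mu) * t) * ‖z 0 - h (x 0)‖)
      Filter.atTop (nhds 0) := by
    simpa using (Real.tendsto_exp_atBot.comp
      (Filter.tendsto_id.const_mul_atTop_of_neg hc)).mul_const ‖z 0 - h (x 0)‖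
  refine squeeze_zero' (Filter.Eventually.of_forall fun t => norm_nonneg _) ?_ hlim
  filter_upwards [Filter.eventually_ge_atTop 0] with t ht using hbound t ht
end

section
/- Let λ_xe > 0, L_e > 0, λ_ez > 0, μ ∈ (0,1] with λ_ez ≠ μ λ_xe, and c₀, c₁ ≥ 0. Let f_r : ℝⁿ × [0,∞) → ℝⁿ satisfy ⟨f_r(a,t) − f_r(b,t), a − b⟩ ≤ −λ_xe‖a − b‖² for all a, b and t ≥ 0, and f_r(0,t) = 0 for all t ≥ 0. Let r : [0,∞) → ℝⁿ satisfy ‖r(t)‖ ≤ L_e (c₀ e^{−(λ_ez/μ) t} + μ c₁) for all t ≥ 0. If e : [0,∞) → ℝⁿ is differentiable with e′(t) = f_r(e(t), t) + r(t) for all t ≥ 0, then ‖e(t)‖ ≤ e^{−λ_xe t}‖e(0)‖ + (L_e c₀ μ/(λ_ez − μ λ_xe))(e^{−λ_xe t} − e^{−(λ_ez/μ) t}) + (μ L_e c₁/λ_xe)(1 − e^{−λ_xe t}) for all t ≥ 0; in particular limsup_{t→∞} ‖e(t)‖ ≤ μ L_e c₁/λ_xe. -/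
/-!
Pairing the error equation with `e` and using the contraction inequality against the equilibrium `0`
gives `⟪e, e'⟫ ≤ -λ ‖e‖² + ρ ‖e‖`, where `ρ` bounds the residual. The claimed bound is exactly the
solution `b` of the scalar comparison equation `b' = -λ b + ρ`, `b 0 = ‖e 0‖`, and
`norm_le_of_inner_deriv_le` is the corresponding comparison principle. It compares the squares
`‖e‖²` and `(b + ε)²`, since `‖e‖` need not be differentiable at the zeros of `e`. The bound on the
limit superior follows by letting `t → ∞` in the exponentials.
-/

open scoped RealInnerProductSpace

/-- Comparison principle: a trajectory with `⟪e, e'⟫ ≤ -λ ‖e‖² + ρ ‖e‖` stays below every nonnegative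
solution of `b' = -λ b + ρ` that dominates it at time `0`. -/
lemma norm_le_of_inner_deriv_le_s13 {E : Type*} [NormedAddCommGroup E] [InnerProductSpace ℝ E]
    {lam : ℝ} (hlam : 0 < lam) {e e' : ℝ → E} {b ρ : ℝ → ℝ}
    (he : ∀ t ≥ (0:ℝ), HasDerivAt e (e' t) t)
    (hinner : ∀ t ≥ (0:ℝ), ⟪e t, e' t⟫ ≤ -lam * ‖e t‖ ^ 2 + ρ t * ‖e t‖)
    (hb : ∀ t, HasDerivAt b (-lam * b t + ρ t) t)
    (hb0 : ∀ t ≥ (0:ℝ), 0 ≤ b t) (h0 : ‖e 0‖ ≤ b 0) :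
    ∀ t ≥ (0:ℝ), ‖e t‖ ≤ b t := by
  intro T hT
  refine le_of_forall_pos_le_add fun ε hε => ?_
  have key : ‖e T‖ ^ 2 ≤ (b T + ε) ^ 2 := by
    refine image_le_of_deriv_right_lt_deriv_boundary (a := 0) (b := T)
      (f := fun t => ‖e t‖ ^ 2) (f' := fun t => 2 * ⟪e t, e' t⟫)
      (B := fun t => (b t + ε) ^ 2) (B' := fun t => 2 * (b t + ε) * (-lam * b t + ρ t))
      ?_ ?_ ?_ ?_ ?_ ⟨hT, le_rfl⟩
    · intro t ht
      exact ((he t ht.1).norm_sq).continuousAt.continuousWithinAt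
    · intro t ht
      exact ((he t ht.1).norm_sq).hasDerivWithinAt
    · exact pow_le_pow_left₀ (norm_nonneg _) (by linarith) 2
    · intro t
      have h := ((hb t).add_const ε).fun_pow 2
      simpa using h
    · intro t ht heq
      have hpos : 0 < b t + ε := by linarith [hb0 t ht.1]
      have hnorm : ‖e t‖ = b t + ε :=
        (pow_left_inj₀ (norm_nonneg _) hpos.le two_ne_zero).1 heq
      have h := hinner t ht.1
      rw [hnorm] at h
      -- The strict gap between the two derivatives is `2 λ ε (b + ε)`.
      have hgap : 0 < lam * ε * (b t + ε) := by positivity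
      change 2 * ⟪e t, e' t⟫ < 2 * (b t + ε) * (-lam * b t + ρ t)
      nlinarith
  exact (pow_le_pow_iff_left₀ (norm_nonneg _) (by linarith [hb0 T hT]) two_ne_zero).1 key

lemma tendsto_exp_neg_mul_atTop {k : ℝ} (hk : 0 < k) :
    Filter.Tendsto (fun t : ℝ => Real.exp (-k * t)) Filter.atTop (nhds 0) :=
  Real.tendsto_exp_atBot.comp (Filter.tendsto_id.const_mul_atTop_of_neg (neg_neg_of_pos hk))

/-- The slow tracking-error bound in the nonstandard case (Theorem 3, equation (33),
condition numbers 1): the tracking error converges to an ultimate bound proportional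
to `μ`. -/
theorem stmt_13 {n : ℕ} (lamxe Le lamez mu c₀ c₁ : ℝ)
    (hlamxe : 0 < lamxe) (hLe : 0 < Le) (hlamez : 0 < lamez)
    (hmu0 : 0 < mu) (hmu1 : mu ≤ 1) (hne : lamez ≠ mu * lamxe)
    (hc₀ : 0 ≤ c₀) (hc₁ : 0 ≤ c₁)
    (fr : EuclideanSpace ℝ (Fin n) → ℝ → EuclideanSpace ℝ (Fin n))
    (hfr : ∀ (a b : EuclideanSpace ℝ (Fin n)), ∀ t ≥ (0:ℝ),
      ⟪fr a t - fr b t, a - b⟫ ≤ -lamxe * ‖a - b‖ ^ 2)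
    (hfr0 : ∀ t ≥ (0:ℝ), fr 0 t = 0)
    (r : ℝ → EuclideanSpace ℝ (Fin n))
    (hr : ∀ t ≥ (0:ℝ), ‖r t‖ ≤ Le * (c₀ * Real.exp (-(lamez / mu) * t) + mu * c₁))
    (e : ℝ → EuclideanSpace ℝ (Fin n))
    (he : ∀ t ≥ (0:ℝ), HasDerivAt e (fr (e t) t + r t) t) :
    (∀ t ≥ (0:ℝ), ‖e t‖ ≤
        Real.exp (-lamxe * t) * ‖e 0‖ +
          Le * c₀ * mu / (lamez - mu * lamxe) *
            (Real.exp (-lamxe * t) - Real.exp (-(lamez / mu) * t)) +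
          mu * Le * c₁ / lamxe * (1 - Real.exp (-lamxe * t))) ∧
    Filter.limsup (fun t => ‖e t‖) Filter.atTop ≤ mu * Le * c₁ / lamxe := by
  have hbound : ∀ t ≥ (0:ℝ), ‖e t‖ ≤
        Real.exp (-lamxe * t) * ‖e 0‖ +
          Le * c₀ * mu / (lamez - mu * lamxe) *
            (Real.exp (-lamxe * t) - Real.exp (-(lamez / mu) * t)) +
          mu * Le * c₁ / lamxe * (1 - Real.exp (-lamxe * t)) := by
    have hne' : lamez - mu * lamxe ≠ 0 := sub_ne_zero.2 hne
    refine norm_le_of_inner_deriv_le_s13 (e' := fun t => fr (e t) t + r t)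
      (ρ := fun t => Le * (c₀ * Real.exp (-(lamez / mu) * t) + mu * c₁)) hlamxe he ?_ ?_ ?_ ?_
    · intro t ht
      have h1 := hfr (e t) 0 t ht
      rw [hfr0 t ht, sub_zero, sub_zero, real_inner_comm] at h1
      have h2 : ⟪e t, r t⟫ ≤ ‖e t‖ * ‖r t‖ := real_inner_le_norm _ _
      have h3 := mul_le_mul_of_nonneg_left (hr t ht) (norm_nonneg (e t))
      rw [inner_add_right]
      linarith
    · intro t
      have hexp : ∀ k : ℝ, HasDerivAt (fun s : ℝ => Real.exp (k * s)) (Real.exp (k * t) * k) t :=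
        fun k => by simpa using ((hasDerivAt_id t).const_mul k).exp
      have h1 := hexp (-lamxe)
      have h2 := hexp (-(lamez / mu))
      refine HasDerivAt.congr_deriv (((h1.mul_const ‖e 0‖).add
        ((h1.sub h2).const_mul (Le * c₀ * mu / (lamez - mu * lamxe)))).add
        ((h1.const_sub 1).const_mul (mu * Le * c₁ / lamxe))) ?_
      generalize Real.exp (-lamxe * t) = A
      generalize Real.exp (-(lamez / mu) * t) = C
      obtain ⟨D, hD⟩ : ∃ D, D = lamez - mu * lamxe := ⟨_, rfl⟩
      have hez : lamez = D + mu * lamxe := by linarith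
      rw [← hD] at hne' ⊢
      rw [hez]
      field_simp
      ring
    · intro t ht
      have hslow : Real.exp (-lamxe * t) ≤ 1 := Real.exp_le_one_iff.2 (by nlinarith)
      -- The difference of exponentials has the same sign as `λ_ez - μ λ_xe`.
      have hmid : 0 ≤ Le * c₀ * mu / (lamez - mu * lamxe) *
          (Real.exp (-lamxe * t) - Real.exp (-(lamez / mu) * t)) := by
        have hnum : 0 ≤ Le * c₀ * mu := by positivity
        rcases lt_or_gt_of_ne hne with h | h
        · refine mul_nonneg_of_nonpos_of_nonpos
            (div_nonpos_of_nonneg_of_nonpos hnum (by linarith)) (sub_nonpos.2 (Real.exp_le_exp.2 ?_))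
          have : lamez / mu ≤ lamxe := (div_le_iff₀ hmu0).2 (by linarith)
          nlinarith
        · refine mul_nonneg (div_nonneg hnum (by linarith)) (sub_nonneg.2 (Real.exp_le_exp.2 ?_))
          have : lamxe ≤ lamez / mu := (le_div_iff₀ hmu0).2 (by linarith)
          nlinarith
      have hlast : 0 ≤ mu * Le * c₁ / lamxe * (1 - Real.exp (-lamxe * t)) :=
        mul_nonneg (by positivity) (by linarith)
      positivity
    · simp
  refine ⟨hbound, ?_⟩
  have h1 := tendsto_exp_neg_mul_atTop hlamxe
  have h2 := tendsto_exp_neg_mul_atTop (div_pos hlamez hmu0)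
  have hlim := ((h1.mul_const ‖e 0‖).add
    ((h1.sub h2).const_mul (Le * c₀ * mu / (lamez - mu * lamxe)))).add
    ((h1.const_sub 1).const_mul (mu * Le * c₁ / lamxe))
  simp only [zero_mul, sub_zero, mul_zero, mul_one, zero_add] at hlim
  rw [← hlim.limsup_eq]
  refine Filter.limsup_le_limsup ?_ ?_ hlim.isBoundedUnder_le
  · filter_upwards [Filter.eventually_ge_atTop 0] with t ht using hbound t ht
  · exact Filter.IsCoboundedUnder.of_frequently_ge
      (a := 0) (Filter.Frequently.of_forall fun t => norm_nonneg (e t))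
end
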